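/- arXiv:2505.16963 — 2 statements merged into one kernel-verified Lean document; each statement's English description precedes it below -/
import Mathlib

section
/- Let b, X, Y, g be integers with b ≥ 0, Y ≥ b, Y ≥ 2⁸, X ≥ 3b, and g ≥ 1. Then the following are equivalent: (1) b is a power of 2 and Y divides the central binomial coefficient C(2X, X); (2) there exist integers h, k, l, w, x, y, each ≥ b, such that the four bridge relations hold: D·F·I is a perfect square, (U⁴·V² − 4)·J² + 4 is a perfect square, S divides T, and (4·g·C − 4·g·l·Y·J)² < J². Moreover, the implication (1) ⟹ (2) holds already under the weaker assumption X ≥ b (in place of X ≥ 3b). -/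
/-!
The equivalence follows Sun's method. Write `ψ_n(A)` for the Lucas sequence with `ψ_0 = 0`,
`ψ_1 = 1`, `ψ_{n+2} = A ψ_{n+1} - ψ_n`; for `A = 2a` it is the sequence of `y`-coordinates of the
solutions of `x² - (a² - 1) y² = 1`.

* The square condition on `D F I` says `C = ψ_{2X+1}(A)` (`eq_lucasPsi_of_square`,
  `exists_square_of_eq_lucasPsi`). The numbers `D / 4`, `F`, `I` are pairwise coprime, so each is
  a square, and each square encodes a Pell solution. The two step-down lemmas for these solutions
  together with the congruences `H ≡ C (mod F)` and `H ≡ B (mod 2C)` determine the index of `C`.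
* The second square condition says that `J` is some `ψ_r(U²V)`. The form of `J` fixes `r` modulo
  `U²V - 2`, and the size comparison of `C` and `J` then gives `r = X + 1`.
* Therefore `C / J` is approximately `(V+1)^{2X} / V^X` (`lucasPsi_ratio_bounds`), whose integral
  part is congruent to the central binomial coefficient modulo `V`, hence modulo `Y`
  (`ratio_split`). The inequality relating `C` and `J` says that `l Y` is this integral part, which
  is possible exactly when `Y` divides the central binomial coefficient.
* The fractional part is small only if `V` is at least of the order of `4^X`. This is guaranteed by
  `S ∣ T`: since `ψ_n(5/2) = (2/3)(2^n - 2^{-n})`, the divisibility says `b w = 2^{2X+1}`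
  (`two_mul_sub_five_dvd`, `eq_two_pow_of_dvd`), so that `b` is a power of two as well.
-/

/-- The four bridge relations in the variables `b, g, Y, X, h, k, l, w, x, y`. -/
def BridgeRelations (b g Y X h k l w x y : ℤ) : Prop :=
  let U := 2 * l * X * Y
  let V := 4 * g * w * Y
  let A := U * (V + 1)
  let B := 2 * X + 1
  let C := B + (A - 2) * h
  let D := (A ^ 2 - 4) * C ^ 2 + 4
  let E := C ^ 2 * D * x
  let F := 4 * (A ^ 2 - 4) * E ^ 2 + 1
  let G := 1 + C * D * F - 2 * (A + 2) * (A - 2) ^ 2 * E ^ 2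
  let H := C + B * F + (2 * y - 1) * C * F
  let I := (G ^ 2 - 1) * H ^ 2 + 1
  let J := X + 1 + k * (U ^ 2 * V - 2)
  let S := 2 * A - 5
  let T := 3 * b * w * C - 2 * (b ^ 2 * w ^ 2 - 1)
  (∃ m : ℤ, D * F * I = m ^ 2) ∧
  (∃ m : ℤ, (U ^ 4 * V ^ 2 - 4) * J ^ 2 + 4 = m ^ 2) ∧
  S ∣ T ∧
  (4 * g * C - 4 * g * l * Y * J) ^ 2 < J ^ 2

/-- `b` is a power of two and `Y` divides the central binomial coefficient `C(2X, X)`. -/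
def PowerAndBinomial (b Y X : ℤ) : Prop :=
  (∃ j : ℕ, b = 2 ^ j) ∧ Y ∣ ((2 * X).toNat.choose X.toNat : ℤ)

/-! ### Lucas sequences -/

/-- The Lucas sequence `ψ_n(A)` over the integers:
`ψ_0 = 0`, `ψ_1 = 1`, `ψ_{n+2} = A ψ_{n+1} - ψ_n`. -/
def lucasPsi (A : ℤ) : ℕ → ℤ
  | 0 => 0
  | 1 => 1
  | n + 2 => A * lucasPsi A (n + 1) - lucasPsi A n

theorem lucasPsi_zero (A : ℤ) : lucasPsi A 0 = 0 := rfl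

theorem lucasPsi_one (A : ℤ) : lucasPsi A 1 = 1 := rfl

theorem lucasPsi_add_two (A : ℤ) (n : ℕ) :
    lucasPsi A (n + 2) = A * lucasPsi A (n + 1) - lucasPsi A n := rfl

theorem lucasPsi_two_mul_eq_yn {a : ℕ} (a1 : 1 < a) (n : ℕ) :
    lucasPsi (2 * a) n = (Pell.yn a1 n : ℤ) := by
  induction n using Nat.twoStepInduction with
  | zero => simp [lucasPsi_zero]
  | one => simp [lucasPsi_one]
  | more n h0 h1 =>
    rw [lucasPsi_add_two, h0, h1]
    have := Pell.yz_succ_succ a1 n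
    simp only [Pell.yz] at this
    push_cast at this
    linarith

theorem sub_dvd_lucasPsi_sub (A B : ℤ) (n : ℕ) : A - B ∣ lucasPsi A n - lucasPsi B n := by
  induction n using Nat.twoStepInduction with
  | zero => simp [lucasPsi_zero]
  | one => simp [lucasPsi_one]
  | more n h0 h1 =>
    obtain ⟨u, hu⟩ := h0
    obtain ⟨v, hv⟩ := h1
    refine ⟨lucasPsi A (n + 1) + B * v - u, ?_⟩
    rw [lucasPsi_add_two, lucasPsi_add_two]
    linear_combination B * hv - hu

theorem lucasPsi_two (n : ℕ) : lucasPsi 2 n = n := by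
  induction n using Nat.twoStepInduction with
  | zero => simp [lucasPsi_zero]
  | one => simp [lucasPsi_one]
  | more n h0 h1 =>
    rw [lucasPsi_add_two, h0, h1]
    push_cast
    ring

theorem sub_two_dvd_lucasPsi_sub (A : ℤ) (n : ℕ) : A - 2 ∣ lucasPsi A n - n := by
  simpa [lucasPsi_two] using sub_dvd_lucasPsi_sub A 2 n

/-- Simultaneous positivity and growth, in a form suited to induction. -/
theorem lucasPsi_growth {A : ℤ} (hA : 2 ≤ A) (n : ℕ) :
    0 ≤ lucasPsi A n ∧ lucasPsi A n + 1 ≤ lucasPsi A (n + 1) := by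
  induction n with
  | zero => simp [lucasPsi_zero, lucasPsi_one]
  | succ n ih =>
    obtain ⟨h0, h1⟩ := ih
    refine ⟨by linarith, ?_⟩
    rw [lucasPsi_add_two]
    nlinarith

theorem lucasPsi_pow_le {A : ℤ} (hA : 2 ≤ A) (n : ℕ) :
    (A - 1) ^ n ≤ lucasPsi A (n + 1) := by
  induction n with
  | zero => simp [lucasPsi_one]
  | succ n ih =>
    have h := lucasPsi_growth hA n
    rw [lucasPsi_add_two, pow_succ]
    nlinarith

theorem lucasPsi_le_pow {A : ℤ} (hA : 2 ≤ A) (n : ℕ) :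
    lucasPsi A (n + 1) ≤ A ^ n := by
  induction n with
  | zero => simp [lucasPsi_one]
  | succ n ih =>
    have h := lucasPsi_growth hA n
    rw [lucasPsi_add_two, pow_succ]
    nlinarith

theorem lucasPsi_linear_le {A : ℤ} (hA : 2 ≤ A) (n : ℕ) :
    (n : ℤ) + 1 + n * (A - 2) ≤ lucasPsi A (n + 1) := by
  induction n with
  | zero => simp [lucasPsi_one]
  | succ n ih =>
    have h := lucasPsi_growth hA n
    rw [lucasPsi_add_two]
    push_cast
    nlinarith

/-- The value `ψ_n(5/2) = (2/3)(2^n - 2^{-n})`, read modulo `2A - 5`. -/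
theorem two_mul_sub_five_dvd (A : ℤ) (n : ℕ) :
    2 * A - 5 ∣ 3 * 2 ^ n * lucasPsi A n - 2 * (4 ^ n - 1) := by
  induction n using Nat.twoStepInduction with
  | zero => simp [lucasPsi_zero]
  | one => simp [lucasPsi_one]
  | more n h0 h1 =>
    obtain ⟨u, hu⟩ := h0
    obtain ⟨v, hv⟩ := h1
    refine ⟨3 * 2 ^ (n + 1) * lucasPsi A (n + 1) + 5 * v - 4 * u, ?_⟩
    rw [lucasPsi_add_two]
    rw [pow_succ] at hv
    simp only [pow_succ] at hv ⊢
    linear_combination 5 * hv - 4 * hu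

/-! ### Pell solutions and the second step-down lemma -/

theorem yn_pell_int {a : ℕ} (a1 : 1 < a) (n : ℕ) :
    ((a : ℤ) ^ 2 - 1) * (Pell.yn a1 n : ℤ) ^ 2 + 1 = (Pell.xn a1 n : ℤ) ^ 2 := by
  have h := Pell.pell_eqz a1 n
  have hd := Pell.dz_val a1
  simp only [Pell.xz, Pell.yz, Pell.az] at h hd
  rw [hd] at h
  linear_combination -h

theorem exists_yn_of_pell_int {a : ℕ} (a1 : 1 < a) {c m : ℤ} (hc : 0 ≤ c)
    (h : ((a : ℤ) ^ 2 - 1) * c ^ 2 + 1 = m ^ 2) :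
    ∃ n, c = (Pell.yn a1 n : ℤ) ∧ |m| = (Pell.xn a1 n : ℤ) := by
  have key : m.natAbs * m.natAbs - (a * a - 1) * c.natAbs * c.natAbs = 1 := by
    have : m.natAbs * m.natAbs = (a * a - 1) * c.natAbs * c.natAbs + 1 := by
      have ha : 1 ≤ a * a := Nat.one_le_iff_ne_zero.2 (by positivity)
      zify [ha]
      rw [abs_mul_abs_self, mul_assoc, abs_mul_abs_self]
      linear_combination -h
    omega
  obtain ⟨n, h1, h2⟩ := Pell.eq_pell a1 key
  refine ⟨n, ?_, ?_⟩
  · rw [← h2]; simp [abs_of_nonneg hc]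
  · rw [← h1]; simp

/-- The second step-down lemma for the `y`-coordinates: agreement modulo a *square* `x_m ^ 2`
of a Pell numerator determines the index up to sign modulo `2m`. Since `(a² - 1) y² = x² - 1`
and `x_{2n} = 2 x_n² - 1`, it reduces to the statement for the `x`-coordinates with doubled
indices. -/
theorem two_mul_dvd_of_yn_modEq {a : ℕ} (a1 : 1 < a) {s n m : ℕ} (hn : 0 < n) (hnm : 2 * n ≤ m)
    (h : ((Pell.xn a1 m : ℤ)) ^ 2 ∣ (Pell.yn a1 s : ℤ) - Pell.yn a1 n) :
    (2 * m : ℤ) ∣ (s : ℤ) - n ∨ (2 * m : ℤ) ∣ (s : ℤ) + n := by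
  have hx : ∀ t, (Pell.xn a1 (2 * t) : ℤ) = 2 * ((a : ℤ) ^ 2 - 1) * (Pell.yn a1 t : ℤ) ^ 2 + 1 := by
    intro t
    have h1 := Pell.xn_add a1 t t
    have hd := Pell.dz_val a1
    simp only [Pell.az] at hd
    have h2 := yn_pell_int a1 t
    rw [two_mul, h1]
    push_cast
    rw [hd]
    linear_combination -h2
  have hmod : Pell.xn a1 (2 * s) ≡ Pell.xn a1 (2 * n) [MOD Pell.xn a1 m] := by
    apply Nat.ModEq.symm
    rw [Nat.modEq_iff_dvd, hx, hx]
    obtain ⟨c, hc⟩ := h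
    refine ⟨2 * ((a : ℤ) ^ 2 - 1) * (Pell.yn a1 s + Pell.yn a1 n) * Pell.xn a1 m * c, ?_⟩
    linear_combination 2 * ((a : ℤ) ^ 2 - 1) * (Pell.yn a1 s + Pell.yn a1 n) * hc
  rcases Pell.modEq_of_xn_modEq a1 (by omega) hnm hmod with h | h
  · left
    have := (Nat.modEq_iff_dvd.1 h.symm)
    push_cast at this
    obtain ⟨c, hc⟩ := this
    exact ⟨c, by linarith⟩
  · right
    have := Nat.modEq_zero_iff_dvd.1 h
    zify at this
    obtain ⟨c, hc⟩ := this
    exact ⟨c, by linarith⟩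

/-! ### Sun's single-square criterion -/

set_option maxHeartbeats 400000 in
/-- Sun's single-square criterion, soundness: if `D F I` is a square, then `D`, `F` and `I` are
squares up to the factor `4` of `D`, being pairwise coprime, and the Pell solutions they encode
force `C = ψ_B(A)`. Here `A = 2a`. -/
theorem eq_lucasPsi_of_square {a B : ℕ} (a1 : 1 < a) (hB : 0 < B) {A C D E F G H I x y h m : ℤ}
    (hA : A = 2 * a)
    (hC : C = B + (A - 2) * h) (hD : D = (A ^ 2 - 4) * C ^ 2 + 4) (hE : E = C ^ 2 * D * x)
    (hF : F = 4 * (A ^ 2 - 4) * E ^ 2 + 1)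
    (hG : G = 1 + C * D * F - 2 * (A + 2) * (A - 2) ^ 2 * E ^ 2)
    (hH : H = C + B * F + (2 * y - 1) * C * F) (hI : I = (G ^ 2 - 1) * H ^ 2 + 1)
    (hh : 1 ≤ h) (hx : 1 ≤ x) (hy : 1 ≤ y) (hm : D * F * I = m ^ 2) :
    C = lucasPsi A B := by
  have ha : (2 : ℤ) ≤ a := by exact_mod_cast a1
  have hB' : (1 : ℤ) ≤ B := by exact_mod_cast hB
  have hBC : (B : ℤ) < C := by rw [hC, hA]; nlinarith
  have hCpos : 0 < C := by linarith
  have ha2 : (0 : ℤ) < (a : ℤ) ^ 2 - 1 := by nlinarith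
  -- `A` is even, so `D` carries a spurious factor `4`.
  obtain ⟨D', hD'⟩ : ∃ D', D' = ((a : ℤ) ^ 2 - 1) * C ^ 2 + 1 := ⟨_, rfl⟩
  have hDD : D = 4 * D' := by rw [hD, hD', hA]; ring
  have hD'pos : 0 < D' := by rw [hD']; positivity
  have hD'a : (a : ℤ) ^ 2 ≤ D' := by
    have : 1 ≤ C ^ 2 := one_le_pow₀ hCpos
    rw [hD']
    linarith [mul_le_mul_of_nonneg_left this ha2.le]
  have hFE : F = ((a : ℤ) ^ 2 - 1) * (4 * E) ^ 2 + 1 := by rw [hF, hA]; ring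
  have hFpos : 0 < F := by rw [hFE]; positivity
  have hGF : G = a + F * (C * D - (a - 1)) := by
    rw [hG, hF, hA]; ring
  have hCD : (a : ℤ) ≤ C * D := by
    have h1 : (a : ℤ) ≤ D := by rw [hDD]; linarith [Int.le_self_sq (a : ℤ)]
    linarith [le_mul_of_one_le_left (by linarith : 0 ≤ D) hCpos]
  have hGgt : (a : ℤ) < G := by
    rw [hGF]
    linarith [mul_pos hFpos (by linarith : 0 < C * D - (a - 1))]
  have hGsq : 0 < G ^ 2 - 1 := by
    linarith [one_lt_pow₀ (by linarith : 1 < G) two_ne_zero]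
  have hIpos : 0 < I := by rw [hI]; positivity
  have hHpos : 0 < H := by
    rw [hH]
    have h1 : 0 < (2 * y - 1) * C * F := by
      have : 0 < 2 * y - 1 := by linarith
      positivity
    have h2 : 0 < (B : ℤ) * F := by positivity
    linarith
  obtain ⟨g', hg'⟩ : ∃ g', G - 1 = C * D' * g' := by
    refine ⟨4 * F - 32 * (A + 2) * (A - 2) ^ 2 * C ^ 3 * D' * x ^ 2, ?_⟩
    rw [hG, hE, hDD]; ring
  -- Pairwise coprimality.
  have cop1 : IsCoprime D' F := by
    refine ⟨-(64 * (A ^ 2 - 4) * C ^ 4 * D' * x ^ 2), 1, ?_⟩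
    rw [hF, hE, hDD]; ring
  have cop2 : IsCoprime D' I := by
    refine ⟨-(C * g' * (G + 1) * H ^ 2), 1, ?_⟩
    rw [hI]; linear_combination (G + 1) * H ^ 2 * hg'
  have cop3 : IsCoprime F I := by
    obtain ⟨c, hc⟩ : ∃ c, I = D' + F * c := by
      refine ⟨(C * D - (a - 1)) * (2 * a + F * (C * D - (a - 1))) * H ^ 2
        + ((a : ℤ) ^ 2 - 1) * (B + (2 * y - 1) * C) * (H + C), ?_⟩
      have hHC : H = C + F * (B + (2 * y - 1) * C) := by rw [hH]; ring
      have e1 : G ^ 2 = (a : ℤ) ^ 2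
          + F * (C * D - (a - 1)) * (2 * a + F * (C * D - (a - 1))) := by rw [hGF]; ring
      have e2 : H ^ 2 = C ^ 2 + F * (B + (2 * y - 1) * C) * (H + C) := by
        rw [hHC]; ring
      rw [hI, hD', e1]
      linear_combination ((a : ℤ) ^ 2 - 1) * e2
    have : IsCoprime F D' := cop1.symm
    rw [hc]
    exact IsCoprime.add_mul_left_right this c
  have hmeven : (2 : ℤ) ∣ m := by
    have : (2 : ℤ) ∣ m ^ 2 := ⟨2 * D' * F * I, by rw [← hm, hDD]; ring⟩
    exact Int.prime_two.dvd_of_dvd_pow this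
  obtain ⟨m', hm'⟩ := hmeven
  have hprod : D' * (F * I) = m' ^ 2 := by
    have : 4 * (D' * (F * I)) = 4 * m' ^ 2 := by
      rw [hDD, hm'] at hm; linear_combination hm
    linarith
  have sq_of_pos : ∀ {u : ℤ}, 0 < u → (∃ r, u = r ^ 2 ∨ u = -r ^ 2) → ∃ r, u = r ^ 2 := by
    rintro u hu ⟨r, hr | hr⟩
    · exact ⟨r, hr⟩
    · nlinarith [sq_nonneg r]
  obtain ⟨d, hd⟩ := sq_of_pos hD'pos (Int.sq_of_isCoprime (cop1.mul_right cop2) hprod)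
  obtain ⟨e, he⟩ := sq_of_pos (mul_pos hFpos hIpos)
    (Int.sq_of_isCoprime (cop1.mul_right cop2).symm (by rw [mul_comm]; exact hprod))
  obtain ⟨f, hf⟩ := sq_of_pos hFpos (Int.sq_of_isCoprime cop3 he)
  obtain ⟨i, hi⟩ := sq_of_pos hIpos (Int.sq_of_isCoprime cop3.symm (by rw [mul_comm]; exact he))
  -- The three Pell solutions.
  obtain ⟨n, hn, hn'⟩ := exists_yn_of_pell_int a1 hCpos.le (hD'.symm.trans hd)
  have hEpos : 0 < E := by
    rw [hE, hDD]
    have : 0 < x := by linarith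
    positivity
  obtain ⟨t, ht, ht'⟩ := exists_yn_of_pell_int a1 (by positivity : 0 ≤ 4 * E) (hFE.symm.trans hf)
  obtain ⟨γ, hγ⟩ : ∃ γ : ℕ, G = γ := ⟨G.toNat, by rw [Int.toNat_of_nonneg]; linarith⟩
  have γ1 : 1 < γ := by zify; linarith
  obtain ⟨s, hs, -⟩ := exists_yn_of_pell_int γ1 hHpos.le (by rw [← hγ, ← hI, hi])
  have hnpos : 0 < n := by
    rcases Nat.eq_zero_or_pos n with h0 | h0
    · rw [h0] at hn; simp at hn; linarith
    · exact h0
  -- `C² ∣ ψ_t` forces `C ∣ t`.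
  have hCt : C ∣ t := by
    rw [hn]
    have : Pell.yn a1 n * Pell.yn a1 n ∣ Pell.yn a1 t := by
      zify
      rw [← hn, ← ht, hE]
      exact ⟨4 * (D * x), by ring⟩
    exact_mod_cast Pell.dvd_of_ysq_dvd a1 this
  have hnt : 2 * n ≤ t := by
    apply le_of_lt
    rw [← (Pell.strictMono_y a1).lt_iff_lt]
    have h2 := Pell.yn_add a1 n n
    rw [← two_mul] at h2
    zify at h2 ⊢
    rw [h2, ← ht, ← hn, ← hn', hE, hDD, hd, ← sq_abs d]
    have : 0 < |d| := by
      apply abs_pos.2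
      rintro rfl
      simp at hd; linarith
    have e1 : |d| * C ≤ (|d| * C) ^ 2 := Int.le_self_sq _
    have e2 : (|d| * C) ^ 2 ≤ (|d| * C) ^ 2 * x := le_mul_of_one_le_right (sq_nonneg _) hx
    linarith [mul_pos this hCpos]
  -- `ψ_s(2G) ≡ ψ_s(A)` and `H ≡ C` modulo `F = x_t²`.
  have hsF : ((Pell.xn a1 t : ℤ)) ^ 2 ∣ (Pell.yn a1 s : ℤ) - Pell.yn a1 n := by
    rw [← ht', sq_abs, ← hf, ← lucasPsi_two_mul_eq_yn, ← hn]
    have h1 := sub_dvd_lucasPsi_sub (2 * γ) (2 * a) s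
    rw [lucasPsi_two_mul_eq_yn γ1, ← hs] at h1
    have h2 : F ∣ 2 * (γ : ℤ) - 2 * a :=
      ⟨2 * (C * D - (a - 1)), by rw [← hγ, hGF]; ring⟩
    have h3 : F ∣ H - C := ⟨B + (2 * y - 1) * C, by rw [hH]; ring⟩
    have e : lucasPsi (2 * a) s - C = H - C - (H - lucasPsi (2 * a) s) := by ring
    rw [e]
    exact dvd_sub h3 (h2.trans h1)
  -- `ψ_s(2G) ≡ s` and `H ≡ B` modulo `2C`.
  have hsB : 2 * C ∣ (s : ℤ) - B := by
    have h1 := sub_two_dvd_lucasPsi_sub (2 * γ) s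
    rw [lucasPsi_two_mul_eq_yn γ1, ← hs] at h1
    have h2 : 2 * C ∣ 2 * (γ : ℤ) - 2 :=
      ⟨D' * g', by rw [← hγ]; linear_combination 2 * hg'⟩
    have h3 : 2 * C ∣ H - B := by
      refine ⟨y + (B + (2 * y - 1) * C) * (32 * (A ^ 2 - 4) * C ^ 3 * D' ^ 2 * x ^ 2), ?_⟩
      rw [hH, hF, hE, hDD]; ring
    have e : (s : ℤ) - B = H - B - (H - s) := by ring
    rw [e]
    exact dvd_sub h3 (h2.trans h1)
  have h2t : 2 * C ∣ 2 * (t : ℤ) := mul_dvd_mul_left 2 hCt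
  have hnC : (n : ℤ) ≤ C := by rw [hn]; exact_mod_cast Pell.yn_ge_n a1 n
  have hfin : (B : ℤ) = n := by
    rcases two_mul_dvd_of_yn_modEq a1 hnpos hnt hsF with h | h
    · have h4 := dvd_sub (h2t.trans h) hsB
      have h5 : (s : ℤ) - n - (s - B) = B - n := by ring
      rw [h5] at h4
      have := Int.eq_zero_of_abs_lt_dvd h4 (by rw [abs_lt]; constructor <;> linarith)
      linarith
    · have h4 := dvd_sub (h2t.trans h) hsB
      have h5 : (s : ℤ) + n - (s - B) = B + n := by ring
      rw [h5] at h4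
      have := Int.le_of_dvd (by linarith) h4
      linarith
  have : B = n := by exact_mod_cast hfin
  rw [this, hA, lucasPsi_two_mul_eq_yn a1]
  exact hn

set_option maxHeartbeats 400000 in
/-- Sun's single-square criterion, completeness: for `C = ψ_B(A)` the parameters `x` and `y` can
be chosen, and as large as prescribed, so that `D F I` is a square. Again `A = 2a`. -/
theorem exists_square_of_eq_lucasPsi {a B : ℕ} (a1 : 1 < a) (hB : 3 ≤ B) (hBa : B ≤ a)
    {A C β : ℤ} (hβ : β ≤ B) (hA : A = 2 * a) (hC : C = lucasPsi A B) :
    ∃ x y : ℤ, β ≤ x ∧ β ≤ y ∧ ∀ D E F G H I : ℤ, D = (A ^ 2 - 4) * C ^ 2 + 4 →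
      E = C ^ 2 * D * x → F = 4 * (A ^ 2 - 4) * E ^ 2 + 1 →
      G = 1 + C * D * F - 2 * (A + 2) * (A - 2) ^ 2 * E ^ 2 →
      H = C + B * F + (2 * y - 1) * C * F → I = (G ^ 2 - 1) * H ^ 2 + 1 →
      ∃ m : ℤ, D * F * I = m ^ 2 := by
  have ha : (2 : ℤ) ≤ a := by exact_mod_cast a1
  have hB' : (3 : ℤ) ≤ B := by exact_mod_cast hB
  have hBa' : (B : ℤ) ≤ a := by exact_mod_cast hBa
  have ha2 : (0 : ℤ) < (a : ℤ) ^ 2 - 1 := by nlinarith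
  rw [hA, lucasPsi_two_mul_eq_yn a1] at hC
  have hdouble : ∀ t, (Pell.yn a1 (2 * t) : ℤ) = 2 * Pell.xn a1 t * Pell.yn a1 t := by
    intro t
    rw [two_mul, Pell.yn_add]
    push_cast
    ring
  -- `4E` will be `ψ_{4n}` with `n = 2B ψ_{2B}`: then `(C² D) = ψ_{2B}²` divides `ψ_n`, and the
  -- factor `4` comes from two index doublings.
  obtain ⟨n, hn⟩ : ∃ n, n = 2 * B * Pell.yn a1 (2 * B) := ⟨_, rfl⟩
  obtain ⟨q, hq⟩ := Pell.ysq_dvd_yy a1 (2 * B)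
  rw [← hn] at hq
  have hYpos : 0 < Pell.yn a1 (2 * B) := by
    have := Pell.yn_ge_n a1 (2 * B)
    omega
  have hnB : 2 * B ≤ n := by rw [hn]; exact Nat.le_mul_of_pos_right _ hYpos
  have hqpos : 0 < q := by
    rcases Nat.eq_zero_or_pos q with h | h
    · have := Pell.yn_ge_n a1 n
      rw [h] at hq
      omega
    · exact h
  obtain ⟨x, hx⟩ : ∃ x : ℤ, x = Pell.xn a1 (2 * n) * Pell.xn a1 n * q := ⟨_, rfl⟩
  have hβx : β ≤ x := by
    have h1 : B ≤ Pell.xn a1 (2 * n) * Pell.xn a1 n * q := by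
      have h2 := Pell.n_lt_xn a1 (2 * n)
      have h3 := Pell.x_pos a1 n
      calc B ≤ Pell.xn a1 (2 * n) := by omega
        _ ≤ Pell.xn a1 (2 * n) * Pell.xn a1 n := Nat.le_mul_of_pos_right _ h3
        _ ≤ _ := Nat.le_mul_of_pos_right _ hqpos
    rw [hx]
    have : (B : ℤ) ≤ (Pell.xn a1 (2 * n) * Pell.xn a1 n * q : ℤ) := by exact_mod_cast h1
    linarith
  obtain ⟨D, hD⟩ : ∃ D, D = (A ^ 2 - 4) * C ^ 2 + 4 := ⟨_, rfl⟩
  obtain ⟨E, hE⟩ : ∃ E, E = C ^ 2 * D * x := ⟨_, rfl⟩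
  obtain ⟨F, hF⟩ : ∃ F, F = 4 * (A ^ 2 - 4) * E ^ 2 + 1 := ⟨_, rfl⟩
  obtain ⟨G, hG⟩ : ∃ G, G = 1 + C * D * F - 2 * (A + 2) * (A - 2) ^ 2 * E ^ 2 := ⟨_, rfl⟩
  have hDx : D = (2 * Pell.xn a1 B) ^ 2 := by
    have := yn_pell_int a1 B
    rw [hD, hA, hC]
    linear_combination 4 * this
  have hE4 : 4 * E = Pell.yn a1 (2 * (2 * n)) := by
    have h1 : (Pell.yn a1 n : ℤ) = Pell.yn a1 (2 * B) * Pell.yn a1 (2 * B) * q := by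
      exact_mod_cast hq
    rw [hdouble, hdouble, h1, hdouble, hE, hDx, hC, hx]
    ring
  have hFx : F = (Pell.xn a1 (2 * (2 * n)) : ℤ) ^ 2 := by
    rw [← yn_pell_int, ← hE4, hF, hA]
    ring
  have hFpos : 0 < F := by
    rw [hFx]
    have := Pell.x_pos a1 (2 * (2 * n))
    positivity
  have hCB : (B : ℤ) ≤ C := by rw [hC]; exact_mod_cast Pell.yn_ge_n a1 B
  have hCpos : 0 < C := by linarith
  have hGF : G = a + F * (C * D - (a - 1)) := by
    rw [hG, hF, hA]; ring
  have hD4 : 4 * (a : ℤ) ^ 2 ≤ D := by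
    have : 1 ≤ C ^ 2 := one_le_pow₀ hCpos
    rw [hD, hA]
    linarith [mul_le_mul_of_nonneg_left this ha2.le]
  have hGbig : 2 * (a * C * F) ≤ G := by
    have h1 : C * (4 * (a : ℤ) ^ 2) ≤ C * D := mul_le_mul_of_nonneg_left hD4 hCpos.le
    have h2 : C * (8 * (a : ℤ)) ≤ C * (4 * (a : ℤ) ^ 2) :=
      mul_le_mul_of_nonneg_left (by nlinarith) hCpos.le
    have h3 : (a : ℤ) ≤ a * C := le_mul_of_one_le_right (by linarith) hCpos
    have h4 : 2 * (a * C) ≤ C * D - (a - 1) := by nlinarith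
    have := mul_le_mul_of_nonneg_left h4 hFpos.le
    rw [hGF]
    linarith
  have haCF : (a : ℤ) ≤ a * C * F := by
    rw [mul_assoc]
    exact le_mul_of_one_le_right (by linarith) (mul_pos hCpos hFpos)
  obtain ⟨γ, hγ⟩ : ∃ γ : ℕ, G = γ := ⟨G.toNat, by rw [Int.toNat_of_nonneg]; linarith⟩
  have γ1 : 1 < γ := by zify; linarith
  obtain ⟨H, hH⟩ : ∃ H, H = lucasPsi (2 * γ) B := ⟨_, rfl⟩
  -- `y` is found from the congruences for `H` modulo the coprime numbers `F` and `2C`.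
  have hcop : IsCoprime F (2 * C) := by
    refine ⟨1, -(2 * (A ^ 2 - 4) * C ^ 3 * D ^ 2 * x ^ 2), ?_⟩
    rw [hF, hE]; ring
  have dvd1 : F ∣ H - C - B * F + C * F := by
    have h1 := sub_dvd_lucasPsi_sub (2 * γ) (2 * a) B
    rw [lucasPsi_two_mul_eq_yn a1, ← hC, ← hH] at h1
    have h2 : F ∣ 2 * (γ : ℤ) - 2 * a :=
      ⟨2 * (C * D - (a - 1)), by rw [← hγ, hGF]; ring⟩
    obtain ⟨c, hc⟩ := h2.trans h1
    exact ⟨c - B + C, by linear_combination hc⟩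
  have dvd2 : 2 * C ∣ H - C - B * F + C * F := by
    have h1 := sub_two_dvd_lucasPsi_sub (2 * γ) B
    rw [← hH] at h1
    have h2 : 2 * C ∣ 2 * (γ : ℤ) - 2 := by
      refine ⟨D * F - 2 * (A + 2) * (A - 2) ^ 2 * C ^ 3 * D ^ 2 * x ^ 2, ?_⟩
      rw [← hγ, hG, hE]; ring
    obtain ⟨c, hc⟩ := h2.trans h1
    refine ⟨c + (C - B) * (2 * (A ^ 2 - 4) * C ^ 3 * D ^ 2 * x ^ 2), ?_⟩
    have hF' : F = 1 + 2 * C * (2 * (A ^ 2 - 4) * C ^ 3 * D ^ 2 * x ^ 2) := by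
      rw [hF, hE]; ring
    linear_combination hc + (C - B) * hF'
  obtain ⟨y, hy⟩ := hcop.mul_dvd dvd1 dvd2
  have hβy : β ≤ y := by
    have h1 : G ^ 2 ≤ H := by
      have hgrow := lucasPsi_pow_le (A := 2 * (γ : ℤ)) (by linarith) (B - 1)
      rw [Nat.sub_add_cancel (by omega), ← hH, ← hγ] at hgrow
      have h2 : (2 * G - 1) ^ 2 ≤ (2 * G - 1) ^ (B - 1) :=
        pow_le_pow_right₀ (by linarith) (by omega)
      have h3 : G ^ 2 ≤ (2 * G - 1) ^ 2 := pow_le_pow_left₀ (by linarith) (by linarith) 2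
      linarith
    have h2 : 4 * (a * C * F) ≤ G ^ 2 := by
      have : (2 * (a * C * F)) ^ 2 ≤ G ^ 2 := pow_le_pow_left₀ (by linarith) hGbig 2
      linarith [Int.le_self_sq (a * C * F)]
    have hCF : 0 < C * F := mul_pos hCpos hFpos
    have h3 : B * F ≤ a * C * F := by
      apply mul_le_mul_of_nonneg_right _ hFpos.le
      linarith [le_mul_of_one_le_right (by linarith : (0 : ℤ) ≤ a) hCpos]
    have h4 : C ≤ C * F := le_mul_of_one_le_right hCpos.le hFpos
    have h5 : C * F * (2 * β) ≤ C * F * (2 * a) :=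
      mul_le_mul_of_nonneg_left (by linarith) hCF.le
    have h6 : (C * F) * (2 * β) ≤ (C * F) * (2 * y) := by
      have : H - C - B * F + C * F = (C * F) * (2 * y) := by rw [hy]; ring
      rw [← this]
      linarith
    linarith [le_of_mul_le_mul_left h6 hCF]
  refine ⟨x, y, hβx, hβy, ?_⟩
  rintro _ _ _ _ H' I rfl rfl rfl rfl hH' hI
  rw [← hD, ← hE, ← hF] at hH'
  rw [← hD, ← hE, ← hF, ← hG] at hI
  rw [← hD, ← hE, ← hF]
  have hHH : H' = H := by rw [hH']; linear_combination -hy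
  have hI' : I = (Pell.xn γ1 B : ℤ) ^ 2 := by
    rw [hI, hHH, hH, lucasPsi_two_mul_eq_yn γ1, hγ, yn_pell_int]
  refine ⟨2 * Pell.xn a1 B * Pell.xn a1 (2 * (2 * n)) * Pell.xn γ1 B, ?_⟩
  rw [hDx, hFx, hI']
  ring

/-! ### The Pell equation for `J` -/

theorem exists_eq_lucasPsi_of_pell {p : ℕ} (p1 : 1 < p) {P J m : ℤ} (hP : P = 2 * p) (hJ : 0 ≤ J)
    (h : (P ^ 2 - 4) * J ^ 2 + 4 = m ^ 2) : ∃ r, J = lucasPsi P r := by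
  have hm : (2 : ℤ) ∣ m := by
    have : (2 : ℤ) ∣ m ^ 2 := ⟨2 * ((p : ℤ) ^ 2 - 1) * J ^ 2 + 2, by rw [← h, hP]; ring⟩
    exact Int.prime_two.dvd_of_dvd_pow this
  obtain ⟨m', rfl⟩ := hm
  have h' : ((p : ℤ) ^ 2 - 1) * J ^ 2 + 1 = m' ^ 2 := by
    have : 4 * (((p : ℤ) ^ 2 - 1) * J ^ 2 + 1) = 4 * m' ^ 2 := by
      rw [hP] at h; linear_combination h
    linarith
  obtain ⟨r, hr, -⟩ := exists_yn_of_pell_int p1 hJ h'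
  exact ⟨r, by rw [hr, hP, lucasPsi_two_mul_eq_yn p1]⟩

theorem lucasPsi_pell {p : ℕ} (p1 : 1 < p) {P : ℤ} (hP : P = 2 * p) (r : ℕ) :
    ∃ m : ℤ, (P ^ 2 - 4) * lucasPsi P r ^ 2 + 4 = m ^ 2 := by
  refine ⟨2 * Pell.xn p1 r, ?_⟩
  have := yn_pell_int p1 r
  rw [hP, lucasPsi_two_mul_eq_yn p1]
  linear_combination 4 * this

/-! ### Quotients of Lucas numbers and the central binomial coefficient -/

/-- Lower and upper estimates of `ψ_{2n+1}(U(V+1)) / ψ_{n+1}(U²V)` by `(V+1)^{2n} / V^n` when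
`U = 2nL`; both relative errors come from Bernoulli's inequality. -/
theorem lucasPsi_ratio_bounds {n : ℕ} (hn : 1 ≤ n) {U V L : ℤ} (hL : 1 ≤ L) (hV : 1 ≤ V)
    (hU : U = 2 * n * L) :
    0 < (lucasPsi (U ^ 2 * V) (n + 1) : ℝ) ∧
    ((V : ℝ) + 1) ^ (2 * n) / V ^ n * (1 - 1 / (L * (V + 1))) ≤
      lucasPsi (U * (V + 1)) (2 * n + 1) / lucasPsi (U ^ 2 * V) (n + 1) ∧
    (lucasPsi (U * (V + 1)) (2 * n + 1) : ℝ) / lucasPsi (U ^ 2 * V) (n + 1) *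
      (1 - 1 / (4 * L ^ 2 * V)) ≤ ((V : ℝ) + 1) ^ (2 * n) / V ^ n := by
  have hn' : (1 : ℤ) ≤ n := by exact_mod_cast hn
  have hU2 : 2 ≤ U := by rw [hU]; nlinarith
  have hA2 : 2 ≤ U * (V + 1) := by nlinarith
  have hP2 : 2 ≤ U ^ 2 * V := by nlinarith
  have c1 := lucasPsi_pow_le hA2 (2 * n)
  have c2 := lucasPsi_le_pow hA2 (2 * n)
  have j1 := lucasPsi_pow_le hP2 n
  have j2 := lucasPsi_le_pow hP2 n
  generalize lucasPsi (U * (V + 1)) (2 * n + 1) = C at *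
  generalize lucasPsi (U ^ 2 * V) (n + 1) = J at *
  have hJpos : 0 < J := lt_of_lt_of_le (pow_pos (by linarith) n) j1
  have rJ : (0 : ℝ) < J := by exact_mod_cast hJpos
  have rL : (1 : ℝ) ≤ L := by exact_mod_cast hL
  have rV : (1 : ℝ) ≤ V := by exact_mod_cast hV
  have rn : (1 : ℝ) ≤ n := by exact_mod_cast hn
  have rU : (U : ℝ) = 2 * n * L := by exact_mod_cast hU
  have rA : (2 : ℝ) ≤ U * (V + 1) := by exact_mod_cast hA2
  have rP : (2 : ℝ) ≤ U ^ 2 * V := by exact_mod_cast hP2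
  have rc1 : ((U : ℝ) * (V + 1) - 1) ^ (2 * n) ≤ C := by exact_mod_cast c1
  have rc2 : (C : ℝ) ≤ (U * (V + 1)) ^ (2 * n) := by exact_mod_cast c2
  have rj1 : ((U : ℝ) ^ 2 * V - 1) ^ n ≤ J := by exact_mod_cast j1
  have rj2 : (J : ℝ) ≤ (U ^ 2 * V) ^ n := by exact_mod_cast j2
  have hρ : ((U : ℝ) * (V + 1)) ^ (2 * n) = (V + 1) ^ (2 * n) / V ^ n * (U ^ 2 * V) ^ n := by
    have : (V : ℝ) ^ n ≠ 0 := by positivity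
    rw [mul_pow, mul_pow, ← pow_mul]
    field_simp
  have hρpos : 0 < ((V : ℝ) + 1) ^ (2 * n) / V ^ n := by positivity
  generalize ((V : ℝ) + 1) ^ (2 * n) / V ^ n = ρ at *
  refine ⟨rJ, ?_, ?_⟩
  · rw [le_div_iff₀ rJ]
    have hb : 1 - 1 / ((L : ℝ) * (V + 1)) ≤ (1 - 1 / (U * (V + 1))) ^ (2 * n) := by
      have := one_add_mul_le_pow (a := -(1 / ((U : ℝ) * (V + 1)))) (by
        have : 1 / ((U : ℝ) * (V + 1)) ≤ 1 := by
          rw [div_le_one (by linarith)]; linarith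
        linarith) (2 * n)
      refine le_trans (le_of_eq ?_) (this.trans (le_of_eq ?_))
      · rw [rU]; push_cast
        have : (n : ℝ) ≠ 0 := by positivity
        have : (L : ℝ) ≠ 0 := by positivity
        have : (V : ℝ) + 1 ≠ 0 := by positivity
        field_simp
        ring
      · rw [← sub_eq_add_neg]
    have h0 : (0 : ℝ) ≤ 1 - 1 / (L * (V + 1)) := by
      have : 1 / ((L : ℝ) * (V + 1)) ≤ 1 := by
        rw [div_le_one (by positivity)]; nlinarith
      linarith
    calc ρ * (1 - 1 / (L * (V + 1))) * J
        ≤ ρ * (1 - 1 / (L * (V + 1))) * (U ^ 2 * V) ^ n :=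
          mul_le_mul_of_nonneg_left rj2 (by positivity)
      _ = ((U : ℝ) * (V + 1)) ^ (2 * n) * (1 - 1 / (L * (V + 1))) := by rw [hρ]; ring
      _ ≤ ((U : ℝ) * (V + 1)) ^ (2 * n) * (1 - 1 / (U * (V + 1))) ^ (2 * n) :=
          mul_le_mul_of_nonneg_left hb (by positivity)
      _ = ((U : ℝ) * (V + 1) - 1) ^ (2 * n) := by
          rw [← mul_pow]
          congr 1
          have : (U : ℝ) * (V + 1) ≠ 0 := by linarith
          field_simp
      _ ≤ C := rc1
  · have hb : 1 - 1 / (4 * (L : ℝ) ^ 2 * V) ≤ (1 - 1 / (U ^ 2 * V)) ^ n := by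
      have := one_add_mul_le_pow (a := -(1 / ((U : ℝ) ^ 2 * V))) (by
        have : 1 / ((U : ℝ) ^ 2 * V) ≤ 1 := by
          rw [div_le_one (by linarith)]; linarith
        linarith) n
      refine le_trans ?_ (this.trans (le_of_eq ?_))
      · have e : (n : ℝ) * (1 / (U ^ 2 * V)) = 1 / (n * (4 * L ^ 2 * V)) := by
          rw [rU]
          field_simp
          ring
        have : 1 / (n * (4 * (L : ℝ) ^ 2 * V)) ≤ 1 / (4 * L ^ 2 * V) := by
          apply one_div_le_one_div_of_le (by positivity)
          exact le_mul_of_one_le_left (by positivity) rn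
        linarith
      · rw [← sub_eq_add_neg]
    have h0 : (0 : ℝ) ≤ 1 - 1 / (4 * L ^ 2 * V) := by
      have : 1 / (4 * (L : ℝ) ^ 2 * V) ≤ 1 := by
        rw [div_le_one (by positivity)]; nlinarith
      linarith
    have key : (C : ℝ) * (1 - 1 / (4 * L ^ 2 * V)) ≤ ρ * J := by
      calc (C : ℝ) * (1 - 1 / (4 * L ^ 2 * V))
          ≤ ρ * (U ^ 2 * V) ^ n * (1 - 1 / (4 * L ^ 2 * V)) := by
            rw [← hρ]; exact mul_le_mul_of_nonneg_right rc2 h0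
        _ ≤ ρ * (U ^ 2 * V) ^ n * (1 - 1 / (U ^ 2 * V)) ^ n :=
            mul_le_mul_of_nonneg_left hb (by positivity)
        _ = ρ * (U ^ 2 * V - 1) ^ n := by
            rw [mul_assoc, ← mul_pow]
            congr 2
            have : (U : ℝ) ^ 2 * V ≠ 0 := by linarith
            field_simp
        _ ≤ ρ * J := mul_le_mul_of_nonneg_left rj1 hρpos.le
    rw [div_mul_eq_mul_div, div_le_iff₀ rJ]
    exact key

/-- Splitting `(V+1)^{2n}` at the middle: the quotient by `V^n` has integral part `N`, which is
the central binomial coefficient modulo `V`, and the remainder `R` is small for large `V`. -/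
theorem binomial_split {n : ℕ} (hn : 1 ≤ n) (V : ℕ) :
    ∃ N R t : ℕ, (V + 1) ^ (2 * n) = V ^ n * N + R ∧ V ^ n ≤ N ∧
      N = (2 * n).choose n + V * t ∧ R * V ≤ 4 ^ n * V ^ n := by
  refine ⟨∑ i ∈ Finset.range (n + 1), V ^ i * (2 * n).choose (n + i),
    ∑ i ∈ Finset.range n, V ^ i * (2 * n).choose i,
    ∑ i ∈ Finset.range n, V ^ i * (2 * n).choose (n + (i + 1)), ?_, ?_, ?_, ?_⟩
  · rw [add_pow, show 2 * n + 1 = n + (n + 1) by ring, Finset.sum_range_add, add_comm,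
      Finset.mul_sum]
    congr 1
    · refine Finset.sum_congr rfl fun i _ => ?_
      simp only [one_pow, mul_one, Nat.cast_id]
      ring
    · refine Finset.sum_congr rfl fun i _ => ?_
      simp
  · rw [Finset.sum_range_succ, ← two_mul, Nat.choose_self, mul_one]
    exact Nat.le_add_left _ _
  · rw [Finset.sum_range_succ', add_comm, Finset.mul_sum]
    congr 1
    · simp
    · refine Finset.sum_congr rfl fun i _ => ?_
      ring
  · calc (∑ i ∈ Finset.range n, V ^ i * (2 * n).choose i) * V
        = ∑ i ∈ Finset.range n, V ^ (i + 1) * (2 * n).choose i := by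
          rw [Finset.sum_mul]
          refine Finset.sum_congr rfl fun i _ => ?_
          ring
      _ ≤ ∑ i ∈ Finset.range n, (2 * n).choose i * V ^ n := by
          refine Finset.sum_le_sum fun i hi => ?_
          have hi' : i + 1 ≤ n := Finset.mem_range.1 hi
          rw [mul_comm]
          rcases Nat.eq_zero_or_pos V with h | h
          · subst h; simp
          · exact Nat.mul_le_mul_left _ (Nat.pow_le_pow_right h hi')
      _ = (∑ i ∈ Finset.range n, (2 * n).choose i) * V ^ n := by rw [Finset.sum_mul]
      _ ≤ (∑ i ∈ Finset.range (2 * n + 1), (2 * n).choose i) * V ^ n := by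
          apply Nat.mul_le_mul_right
          apply Finset.sum_le_sum_of_subset
          intro i hi
          simp only [Finset.mem_range] at hi ⊢
          omega
      _ = 4 ^ n * V ^ n := by
          rw [Nat.sum_range_choose, pow_mul]
          norm_num

/-- The congruence `3Wψ ≡ 2(W² - 1)` modulo `2A - 5` pins down `W = 2^{2n+1}` once the modulus
is large compared with `W`. -/
theorem eq_two_pow_of_dvd {n : ℕ} (hn : 1 ≤ n) {A C V W : ℤ} (hV : 1024 ≤ V) (hW : 1 ≤ W)
    (hWV : 4 * W ≤ V) (hA : V ^ (n + 1) ≤ A) (hC : C = lucasPsi A (2 * n + 1))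
    (h : 2 * A - 5 ∣ 3 * W * C - 2 * (W ^ 2 - 1)) : W = 2 ^ (2 * n + 1) := by
  obtain ⟨K, hK⟩ : ∃ K : ℤ, K = 2 ^ (2 * n + 1) := ⟨_, rfl⟩
  have hK4 : K = 2 * 4 ^ n := by rw [hK, pow_succ, pow_mul]; norm_num; ring
  have h1 := two_mul_sub_five_dvd A (2 * n + 1)
  have h4 : (4 : ℤ) ^ (2 * n + 1) = K ^ 2 := by
    rw [hK, ← pow_mul, mul_comm (2 * n + 1) 2, pow_mul]; norm_num
  rw [← hC, ← hK, h4] at h1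
  obtain ⟨M, hM⟩ : ∃ M : ℤ, M = V ^ n := ⟨_, rfl⟩
  have hAM : V * M ≤ A := by rw [hM]; rw [pow_succ] at hA; linarith
  have hMV : V ≤ M := by
    rw [hM]; exact le_self_pow₀ (by linarith) (by omega)
  have hdvd : 2 * A - 5 ∣ (K - W) * (K * W + 1) := by
    have h2 : 2 * A - 5 ∣ 2 * ((K - W) * (K * W + 1)) := by
      obtain ⟨u, hu⟩ := h1
      obtain ⟨v, hv⟩ := h
      exact ⟨K * v - W * u, by linear_combination K * hv - W * hu⟩
    have hodd : IsCoprime (2 * A - 5) (2 : ℤ) := ⟨1, -A + 3, by ring⟩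
    exact hodd.dvd_of_dvd_mul_left h2
  have hKpos : 2 ≤ K := by
    rw [hK4]; linarith [one_le_pow₀ (by norm_num : (1 : ℤ) ≤ 4) (n := n)]
  have hKK : K ^ 2 ≤ 4 * M := by
    have : (16 : ℤ) ^ n ≤ V ^ n := pow_le_pow_left₀ (by norm_num) (by linarith) n
    have e : K ^ 2 = 4 * 16 ^ n := by
      rw [hK4, mul_pow, ← pow_mul, mul_comm n 2, pow_mul]; norm_num
    rw [e, hM]; linarith
  have hKV : K * V ≤ 8 * M := by
    obtain ⟨k, rfl⟩ : ∃ k, n = k + 1 := ⟨n - 1, by omega⟩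
    have : (4 : ℤ) ^ k ≤ V ^ k := pow_le_pow_left₀ (by norm_num) (by linarith) k
    rw [hK4, hM, pow_succ, pow_succ]
    nlinarith
  by_contra hne
  rw [← hK] at hne
  have hprod : (K - W) * (K * W + 1) ≠ 0 :=
    mul_ne_zero (sub_ne_zero.2 (Ne.symm hne)) (by positivity)
  have hle := Int.le_of_dvd (abs_pos.2 hprod) ((dvd_abs _ _).2 hdvd)
  have hMpos : 0 < M := by linarith
  have hbig : V * V ≤ V * M := mul_le_mul_of_nonneg_left hMV (by linarith)
  have hup : |(K - W) * (K * W + 1)| ≤ V * M := by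
    have e1 : K ^ 2 * W ≤ 4 * M * W := mul_le_mul_of_nonneg_right hKK (by linarith)
    have e2 : M * (4 * W) ≤ M * V := mul_le_mul_of_nonneg_left hWV hMpos.le
    have e3 : K ≤ K * W ^ 2 := le_mul_of_one_le_right (by linarith) (one_le_pow₀ hW)
    have e4 : K * W * (4 * W) ≤ K * W * V := mul_le_mul_of_nonneg_left hWV (by positivity)
    have e5 : K * V * W ≤ 8 * M * W := mul_le_mul_of_nonneg_right hKV (by linarith)
    have e6 : W ≤ K ^ 2 * W := le_mul_of_one_le_left (by linarith) (one_le_pow₀ (by linarith))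
    rw [abs_le]
    constructor
    · nlinarith
    · nlinarith
  nlinarith

/-- Real estimates for soundness: if the ratio `q` is within `1/4` of `L`, then `ρ ≤ 2L`, and `L`
is within `1` of the integral part `N` of `ρ`. -/
theorem soundness_estimate {q ρ L V : ℝ} (hL : 1 ≤ L) (hV : 1024 ≤ V) (hρ : 0 < ρ)
    (h1 : ρ * (1 - 1 / (L * (V + 1))) ≤ q) (h2 : q * (1 - 1 / (4 * L ^ 2 * V)) ≤ ρ)
    (hq : |q - L| < 1 / 4) :
    ρ ≤ 2 * L ∧ |ρ - L| ≤ 1 / 2 := by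
  rw [abs_lt] at hq
  have a1 : 1 / (L * (V + 1)) ≤ 1 / 1024 := by
    apply one_div_le_one_div_of_le (by norm_num); nlinarith
  have a2 : ρ ≤ 2 * L := by nlinarith
  have a3 : ρ * (1 / (L * (V + 1))) ≤ 2 / 1024 := by
    rw [mul_one_div, div_le_iff₀ (by positivity)]
    nlinarith
  have a4 : q * (1 / (4 * L ^ 2 * V)) ≤ 1 / 1024 := by
    have : L ≤ L ^ 2 := by nlinarith
    rw [mul_one_div, div_le_iff₀ (by positivity)]
    nlinarith
  refine ⟨a2, ?_⟩
  rw [abs_le]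
  constructor <;> linarith

/-- Real estimates for completeness, with `L` the integral part of `ρ`. -/
theorem completeness_estimate {q ρ L V g : ℝ} (hL : 1 ≤ L) (hg : 1 ≤ g) (hV : 1024 * g ≤ V)
    (h1 : ρ * (1 - 1 / (L * (V + 1))) ≤ q) (h2 : q * (1 - 1 / (4 * L ^ 2 * V)) ≤ ρ)
    (hρ1 : L ≤ ρ) (hρ2 : ρ ≤ L + 1 / (8 * g)) :
    |q - L| < 1 / (4 * g) := by
  have hVpos : 0 < V := by linarith
  have e8 : 1 / (8 * g) = 1 / (4 * g) / 2 := by field_simp; norm_num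
  have b0 : 1 / (8 * g) ≤ 1 / 8 := by
    apply one_div_le_one_div_of_le (by norm_num); linarith
  have b1 : 1 / V ≤ 1 / (4 * g) / 256 := by
    have : 1 / (4 * g) / 256 = 1 / (1024 * g) := by field_simp; norm_num
    rw [this]
    exact one_div_le_one_div_of_le (by positivity) hV
  have hgpos : 0 < 1 / (4 * g) := by positivity
  have hρL : ρ ≤ 2 * L := by linarith
  have a1 : ρ * (1 / (L * (V + 1))) ≤ 2 * (1 / V) := by
    rw [mul_one_div, ← mul_div_assoc, div_le_div_iff₀ (by positivity) hVpos]
    nlinarith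
  have hε : 1 / (4 * L ^ 2 * V) ≤ 1 / 2 := by
    apply one_div_le_one_div_of_le (by norm_num)
    nlinarith
  have hq : q ≤ 4 * L := by nlinarith
  have a2 : q * (1 / (4 * L ^ 2 * V)) ≤ 1 / V := by
    rw [mul_one_div, div_le_div_iff₀ (by positivity) hVpos, one_mul]
    have hLL : L ≤ L ^ 2 := by nlinarith
    have hLV := mul_le_mul_of_nonneg_right hLL hVpos.le
    have hqV := mul_le_mul_of_nonneg_right hq hVpos.le
    linarith
  rw [abs_lt]
  constructor <;> linarith

/-- The ratio `ρ = (V+1)^{2n} / V^n`, its integral part `N`, and the bound on its fractional part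
when `V` exceeds `8 g 4^n`. -/
theorem ratio_split {n : ℕ} (hn : 1 ≤ n) {V g : ℤ} (hg : 1 ≤ g) (hV : 1 ≤ V) :
    ∃ N t : ℤ, N = (2 * n).choose n + V * t ∧ V ^ n ≤ N ∧
      (N : ℝ) ≤ ((V : ℝ) + 1) ^ (2 * n) / V ^ n ∧
      (8 * g * 4 ^ n ≤ V → ((V : ℝ) + 1) ^ (2 * n) / V ^ n ≤ N + 1 / (8 * g)) := by
  obtain ⟨v, rfl⟩ : ∃ v : ℕ, V = v := ⟨V.toNat, by rw [Int.toNat_of_nonneg]; linarith⟩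
  obtain ⟨N, R, t, h1, h2, h3, h4⟩ := binomial_split hn v
  have rv : (0 : ℝ) < v := by exact_mod_cast hV
  have rg : (1 : ℝ) ≤ g := by exact_mod_cast hg
  have rpos : (0 : ℝ) < (v : ℝ) ^ n := by positivity
  have r1 : ((v : ℝ) + 1) ^ (2 * n) = v ^ n * N + R := by exact_mod_cast h1
  refine ⟨N, t, by exact_mod_cast h3, by exact_mod_cast h2, ?_, ?_⟩
  · rw [le_div_iff₀ (by exact_mod_cast rpos)]
    push_cast
    rw [r1]
    have : (0 : ℝ) ≤ R := by positivity
    linarith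
  · intro hVbig
    have r4 : (R : ℝ) * v ≤ 4 ^ n * v ^ n := by exact_mod_cast h4
    have rbig : 8 * (g : ℝ) * 4 ^ n ≤ v := by exact_mod_cast hVbig
    have hR : (R : ℝ) * (8 * g) ≤ v ^ n := by
      have h5 : (R : ℝ) * (8 * g * 4 ^ n) ≤ R * v :=
        mul_le_mul_of_nonneg_left rbig (by positivity)
      have h6 : (4 : ℝ) ^ n * (R * (8 * g)) ≤ 4 ^ n * v ^ n := by linarith
      exact le_of_mul_le_mul_left h6 (by positivity)
    push_cast
    rw [div_le_iff₀ rpos, r1]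
    have : (R : ℝ) ≤ 1 / (8 * g) * v ^ n := by
      rw [div_mul_eq_mul_div, one_mul, le_div_iff₀ (by positivity)]
      exact hR
    linarith

/-! ### The bridge relations -/

/-- The relations with the abbreviations replaced by variables subject to defining equations, so
that the large polynomial expressions need not be unfolded. -/
theorem bridgeRelations_iff {b g Y X h k l w x y U V A B C D E F G H I J S T : ℤ}
    (hU : U = 2 * l * X * Y) (hV : V = 4 * g * w * Y) (hA : A = U * (V + 1))
    (hB : B = 2 * X + 1) (hC : C = B + (A - 2) * h) (hD : D = (A ^ 2 - 4) * C ^ 2 + 4)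
    (hE : E = C ^ 2 * D * x) (hF : F = 4 * (A ^ 2 - 4) * E ^ 2 + 1)
    (hG : G = 1 + C * D * F - 2 * (A + 2) * (A - 2) ^ 2 * E ^ 2)
    (hH : H = C + B * F + (2 * y - 1) * C * F) (hI : I = (G ^ 2 - 1) * H ^ 2 + 1)
    (hJ : J = X + 1 + k * (U ^ 2 * V - 2)) (hS : S = 2 * A - 5)
    (hT : T = 3 * b * w * C - 2 * (b ^ 2 * w ^ 2 - 1)) :
    BridgeRelations b g Y X h k l w x y ↔
      (∃ m : ℤ, D * F * I = m ^ 2) ∧ (∃ m : ℤ, (U ^ 4 * V ^ 2 - 4) * J ^ 2 + 4 = m ^ 2) ∧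
        S ∣ T ∧ (4 * g * C - 4 * g * l * Y * J) ^ 2 < J ^ 2 := by
  subst hT hS hJ hI hH hG hF hE hD hC hB hA hV hU
  rfl

set_option maxHeartbeats 400000 in
/-- Soundness: for `1 ≤ b ≤ X`, a solution of the relations with all parameters at least `b` gives
the power and divisibility conditions. -/
theorem powerAndBinomial_of_bridge {b X Y g h k l w x y : ℤ} (hb : 1 ≤ b) (hXb : b ≤ X)
    (hYb : b ≤ Y) (hY : 256 ≤ Y) (hg : 1 ≤ g)
    (hrel : BridgeRelations b g Y X h k l w x y)
    (hh : b ≤ h) (hk : b ≤ k) (hl : b ≤ l) (hw : b ≤ w) (hx : b ≤ x) (hy : b ≤ y) :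
    PowerAndBinomial b Y X := by
  obtain ⟨U, hU⟩ : ∃ U, U = 2 * l * X * Y := ⟨_, rfl⟩
  obtain ⟨V, hV⟩ : ∃ V, V = 4 * g * w * Y := ⟨_, rfl⟩
  obtain ⟨A, hA⟩ : ∃ A, A = U * (V + 1) := ⟨_, rfl⟩
  obtain ⟨C, hC⟩ : ∃ C, C = 2 * X + 1 + (A - 2) * h := ⟨_, rfl⟩
  obtain ⟨J, hJ⟩ : ∃ J, J = X + 1 + k * (U ^ 2 * V - 2) := ⟨_, rfl⟩
  obtain ⟨D, hD⟩ : ∃ D, D = (A ^ 2 - 4) * C ^ 2 + 4 := ⟨_, rfl⟩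
  obtain ⟨E, hE⟩ : ∃ E, E = C ^ 2 * D * x := ⟨_, rfl⟩
  obtain ⟨F, hF⟩ : ∃ F, F = 4 * (A ^ 2 - 4) * E ^ 2 + 1 := ⟨_, rfl⟩
  obtain ⟨G, hG⟩ : ∃ G, G = 1 + C * D * F - 2 * (A + 2) * (A - 2) ^ 2 * E ^ 2 := ⟨_, rfl⟩
  obtain ⟨H, hH⟩ : ∃ H, H = C + (2 * X + 1) * F + (2 * y - 1) * C * F := ⟨_, rfl⟩
  obtain ⟨I, hI⟩ : ∃ I, I = (G ^ 2 - 1) * H ^ 2 + 1 := ⟨_, rfl⟩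
  obtain ⟨⟨m₁, hm₁⟩, ⟨m₂, hm₂⟩, hST, hCJ⟩ :=
    (bridgeRelations_iff hU hV hA rfl hC hD hE hF hG hH hI hJ rfl rfl).1 hrel
  obtain ⟨n, hn⟩ : ∃ n : ℕ, X = n := ⟨X.toNat, by rw [Int.toNat_of_nonneg]; linarith⟩
  obtain ⟨L, hL⟩ : ∃ L, L = l * Y := ⟨_, rfl⟩
  have n1 : (1 : ℤ) ≤ n := by linarith
  have n1' : 1 ≤ n := by exact_mod_cast n1
  have hL256 : 256 ≤ L := by
    rw [hL]
    linarith [le_mul_of_one_le_left (by linarith : 0 ≤ Y) (by linarith : 1 ≤ l)]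
  have hwY : w ≤ w * Y := le_mul_of_one_le_right (by linarith) (by linarith)
  have hgwY : w * Y ≤ g * (w * Y) := le_mul_of_one_le_left (by linarith) hg
  have hV1024 : 1024 ≤ V := by
    have : Y ≤ w * Y := le_mul_of_one_le_left (by linarith) (by linarith)
    have e : V = 4 * (g * (w * Y)) := by rw [hV]; ring
    linarith
  have hULn : U = 2 * n * L := by rw [hU, hn, hL]; ring
  have hnL : L ≤ n * L := le_mul_of_one_le_left (by linarith) n1
  have hnL' : (n : ℤ) ≤ n * L := le_mul_of_one_le_right (by linarith) (by linarith)
  have hU512 : 512 ≤ U := by linarith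
  have hUV : U ≤ U * V := le_mul_of_one_le_right (by linarith) (by linarith)
  have hUUV : 512 * (U * V) ≤ U * (U * V) := mul_le_mul_of_nonneg_right hU512 (by linarith)
  have hP : U ^ 2 * V = U * (U * V) := by ring
  -- `C` and `J` are Lucas numbers with the expected indices.
  have hCpsi : C = lucasPsi A (2 * n + 1) := by
    have hnLV : n * L ≤ n * L * (V + 1) :=
      le_mul_of_one_le_right (by linarith) (by linarith)
    obtain ⟨a, ha⟩ : ∃ a : ℕ, (n * L * (V + 1) : ℤ) = a :=
      ⟨(n * L * (V + 1)).toNat, by rw [Int.toNat_of_nonneg]; linarith⟩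
    have a1 : 1 < a := by zify; rw [← ha]; linarith
    refine eq_lucasPsi_of_square (B := 2 * n + 1) (h := h) (x := x) (y := y) a1 (by omega)
      (by rw [← ha, hA, hULn]; ring) ?_ hD hE hF hG ?_ hI
      (by linarith) (by linarith) (by linarith) hm₁
    · rw [hC, hn]; push_cast; ring
    · rw [hH, hn]; push_cast; ring
  clear hm₁ hI hH hG hF hE hD
  have hJpos : 0 < J := by
    rw [hJ, hP]
    have : 0 ≤ k * (U * (U * V) - 2) := mul_nonneg (by linarith) (by linarith)
    linarith
  have hJpsi : J = lucasPsi (U ^ 2 * V) (n + 1) := by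
    obtain ⟨p, hp⟩ : ∃ p : ℕ, (2 * n ^ 2 * L ^ 2 * V : ℤ) = p :=
      ⟨(2 * n ^ 2 * L ^ 2 * V).toNat, by rw [Int.toNat_of_nonneg]; positivity⟩
    have hp2 : U ^ 2 * V = 2 * p := by rw [← hp, hULn]; ring
    have p1 : 1 < p := by zify; linarith
    obtain ⟨r, hr⟩ := exists_eq_lucasPsi_of_pell p1 hp2 hJpos.le
      (m := m₂) (by rw [← hm₂]; ring)
    suffices hrn : r = n + 1 by rw [hr, hrn]
    have hdvd : U ^ 2 * V - 2 ∣ (r : ℤ) - (n + 1) := by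
      obtain ⟨c, hc⟩ := sub_two_dvd_lucasPsi_sub (U ^ 2 * V) r
      rw [← hr, hJ, hn] at hc
      exact ⟨k - c, by linear_combination -hc⟩
    by_contra hne
    have hr2 : 2 * n + 1 ≤ r := by
      rcases lt_or_gt_of_ne hne with hlt | hgt
      · have := Int.le_of_dvd (by zify at hlt; linarith)
          ((dvd_neg (a := U ^ 2 * V - 2)).2 hdvd)
        zify at hlt ⊢
        linarith
      · have := Int.le_of_dvd (by zify at hgt; linarith) hdvd
        zify at hgt ⊢
        linarith
    -- A larger index makes `J ≥ C`, whereas `C / J` is close to `L ≥ 256`.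
    have hCleJ : C ≤ J := by
      have hAP : A ≤ U ^ 2 * V - 1 := by rw [hA, hP]; linarith
      have hA0 : 512 ≤ A := by rw [hA]; linarith
      obtain ⟨r', rfl⟩ : ∃ r', r = r' + 1 := ⟨r - 1, by omega⟩
      calc C ≤ A ^ (2 * n) := by rw [hCpsi]; exact lucasPsi_le_pow (by linarith) _
        _ ≤ (U ^ 2 * V - 1) ^ (2 * n) := pow_le_pow_left₀ (by linarith) hAP _
        _ ≤ (U ^ 2 * V - 1) ^ r' := pow_le_pow_right₀ (by linarith) (by omega)
        _ ≤ J := by rw [hr]; exact lucasPsi_pow_le (by linarith) _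
    have h5 := (abs_lt.1 (abs_lt_of_sq_lt_sq hCJ hJpos.le)).1
    have h6 : 4 * g * C ≤ 4 * g * J := mul_le_mul_of_nonneg_left hCleJ (by linarith)
    have h7 : 4 * g * 2 * J ≤ 4 * g * L * J := by
      apply mul_le_mul_of_nonneg_right _ hJpos.le
      exact mul_le_mul_of_nonneg_left (by linarith) (by linarith)
    have h8 : 1 * J ≤ g * J := mul_le_mul_of_nonneg_right hg hJpos.le
    have h9 : 4 * g * l * Y * J = 4 * g * L * J := by rw [hL]; ring
    linarith
  obtain ⟨-, i1, i2⟩ := lucasPsi_ratio_bounds n1' (L := L) (by linarith)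
    (by linarith : 1 ≤ V) hULn
  rw [← hA, ← hCpsi, ← hJpsi] at i1 i2
  have rJ : (0 : ℝ) < J := by exact_mod_cast hJpos
  have rV : (1024 : ℝ) ≤ V := by exact_mod_cast hV1024
  have rL : (256 : ℝ) ≤ L := by exact_mod_cast hL256
  have hq : |(C : ℝ) / J - L| < 1 / 4 := by
    have h5 := abs_lt_of_sq_lt_sq hCJ hJpos.le
    have h6 : 4 * g * C - 4 * g * l * Y * J = g * (4 * (C - L * J)) := by rw [hL]; ring
    rw [h6, abs_mul, abs_of_pos (by linarith : 0 < g)] at h5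
    have h7 : |4 * (C - L * J)| < J :=
      lt_of_le_of_lt (le_mul_of_one_le_left (abs_nonneg _) hg) h5
    rw [abs_mul] at h7
    have h8 : (4 : ℝ) * |(C : ℝ) - L * J| < J := by
      have : ((4 : ℤ) : ℝ) * |(C : ℝ) - L * J| < J := by exact_mod_cast h7
      exact_mod_cast this
    have h9 : (C : ℝ) / J - L = (C - L * J) / J := by field_simp
    rw [h9, abs_div, abs_of_pos rJ, div_lt_iff₀ rJ]
    linarith
  obtain ⟨N, t, hN, hVN, hNρ, hρN⟩ := ratio_split n1' hg (by linarith : 1 ≤ V)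
  have hVn : (0 : ℝ) < (V : ℝ) ^ n := by positivity
  obtain ⟨hρ2, hρL⟩ := soundness_estimate (by linarith) rV (by positivity) i1 i2 hq
  -- The third relation makes `b w` the power `2 ^ (2X + 1)`.
  have hVL : V ^ n ≤ 2 * L := by
    have : (N : ℝ) ≤ 2 * L := hNρ.trans hρ2
    have : N ≤ 2 * L := by exact_mod_cast this
    linarith
  have hbwY : b * w ≤ w * Y := by
    rw [mul_comm]; exact mul_le_mul_of_nonneg_left hYb (by linarith)
  have hVA : V ^ (n + 1) ≤ A := by
    have h5 : V ^ n * V ≤ 2 * L * V := mul_le_mul_of_nonneg_right hVL (by linarith)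
    have h6 : L * V ≤ n * L * V := mul_le_mul_of_nonneg_right hnL (by linarith)
    rw [pow_succ, hA, hULn]
    linarith
  have hW := eq_two_pow_of_dvd n1' (W := b * w) hV1024
    (by linarith [le_mul_of_one_le_left (by linarith : 0 ≤ w) hb])
    (by have e : V = 4 * (g * (w * Y)) := by rw [hV]; ring
        linarith) hVA hCpsi
    (by convert hST using 1; ring)
  have hVbig : 8 * g * 4 ^ n ≤ V := by
    have e : (2 : ℤ) ^ (2 * n + 1) = 2 * 4 ^ n := by rw [pow_succ, pow_mul]; norm_num; ring
    have h5 : g * (b * w) ≤ g * (w * Y) := mul_le_mul_of_nonneg_left hbwY (by linarith)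
    rw [hW, e] at h5
    rw [hV]
    linarith
  have hNL : N = L := by
    have rg : (1 : ℝ) ≤ g := by exact_mod_cast hg
    have h5 := hρN hVbig
    have h6 : 1 / (8 * (g : ℝ)) ≤ 1 / 8 := by
      apply one_div_le_one_div_of_le (by norm_num); linarith
    rw [abs_le] at hρL
    have h7 : (N : ℝ) < L + 1 := by linarith
    have h8 : (L : ℝ) < N + 1 := by linarith
    have h7' : N < L + 1 := by exact_mod_cast h7
    have h8' : L < N + 1 := by exact_mod_cast h8
    omega
  refine ⟨?_, ?_⟩
  · obtain ⟨β, rfl⟩ : ∃ β : ℕ, b = β := ⟨b.toNat, by rw [Int.toNat_of_nonneg]; linarith⟩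
    have h5 : (β : ℤ) ∣ ((2 ^ (2 * n + 1) : ℕ) : ℤ) := ⟨w, by push_cast; rw [hW]⟩
    obtain ⟨j, -, hj⟩ := (Nat.dvd_prime_pow Nat.prime_two).1 (Int.natCast_dvd_natCast.1 h5)
    exact ⟨j, by exact_mod_cast hj⟩
  · have e : (2 * X).toNat = 2 * n := by omega
    have e' : X.toNat = n := by omega
    rw [e, e']
    refine ⟨l - 4 * g * w * t, ?_⟩
    rw [hNL, hL, hV] at hN
    linear_combination -hN

set_option maxHeartbeats 400000 in
/-- Completeness: with `w = 2^{2X+1} / b` and `l Y` the integral part of `(V+1)^{2X} / V^X`, all other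
parameters are determined by taking `C` and `J` to be the intended Lucas numbers. -/
theorem bridge_of_powerAndBinomial {b X Y g : ℤ} (hXb : b ≤ X) (hYb : b ≤ Y) (hY : 256 ≤ Y)
    (hg : 1 ≤ g) (hpb : PowerAndBinomial b Y X) :
    ∃ h k l w x y : ℤ, BridgeRelations b g Y X h k l w x y ∧
      h ≥ b ∧ k ≥ b ∧ l ≥ b ∧ w ≥ b ∧ x ≥ b ∧ y ≥ b := by
  obtain ⟨⟨j, hj⟩, hdvd⟩ := hpb
  have hb : 1 ≤ b := by rw [hj]; exact one_le_pow₀ (by norm_num)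
  obtain ⟨n, hn⟩ : ∃ n : ℕ, X = n := ⟨X.toNat, by rw [Int.toNat_of_nonneg]; linarith⟩
  have e : (2 * X).toNat = 2 * n := by omega
  have e' : X.toNat = n := by omega
  rw [e, e'] at hdvd
  have n1 : (1 : ℤ) ≤ n := by linarith
  have n1' : 1 ≤ n := by exact_mod_cast n1
  have hjn : j ≤ n := by
    have h1 : 2 ^ j ≤ n := by zify; rw [← hj, ← hn]; exact hXb
    exact (Nat.lt_two_pow_self.le).trans h1
  obtain ⟨w, hw⟩ : ∃ w : ℤ, w = 2 ^ (2 * n + 1 - j) := ⟨_, rfl⟩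
  have hbw : b * w = 2 ^ (2 * n + 1) := by
    rw [hj, hw, ← pow_add]; congr 1; omega
  have hwb : b ≤ w := by
    rw [hj, hw]; exact pow_le_pow_right₀ (by norm_num) (by omega)
  obtain ⟨V, hV⟩ : ∃ V, V = 4 * g * w * Y := ⟨_, rfl⟩
  have hgw : w ≤ g * w := le_mul_of_one_le_left (by linarith) hg
  have hgY : g * 1 ≤ g * w := mul_le_mul_of_nonneg_left (by linarith) (by linarith)
  have hVg : 1024 * g ≤ V := by
    have : g * w * 256 ≤ g * w * Y := mul_le_mul_of_nonneg_left hY (by linarith)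
    rw [hV]; linarith
  have hVbig : 8 * g * 4 ^ n ≤ V := by
    have e : (2 : ℤ) ^ (2 * n + 1) = 2 * 4 ^ n := by rw [pow_succ, pow_mul]; norm_num; ring
    have h5 : g * w * b ≤ g * w * Y := mul_le_mul_of_nonneg_left hYb (by linarith)
    have h6 : g * (b * w) = g * (2 * 4 ^ n) := by rw [hbw, e]
    rw [hV]
    linarith
  -- `l` is determined by `l Y = ⌊(V+1)^{2X} / V^X⌋`.
  obtain ⟨L, t, hLt, hVL, hL1, hL2⟩ := ratio_split n1' hg (by linarith : 1 ≤ V)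
  have hYL : Y ∣ L := by
    rw [hLt, hV]
    exact dvd_add hdvd ⟨4 * g * w * t, by ring⟩
  obtain ⟨l, hl⟩ := hYL
  have hVleL : V ≤ L := le_trans (le_self_pow₀ (by linarith) (by omega)) hVL
  have hlb : b ≤ l := by
    have h5 : Y * (4 * (g * w)) ≤ Y * l := by rw [← hl]; rw [hV] at hVleL; linarith
    have := le_of_mul_le_mul_left h5 (by linarith)
    linarith
  obtain ⟨U, hU⟩ : ∃ U, U = 2 * l * X * Y := ⟨_, rfl⟩
  obtain ⟨A, hA⟩ : ∃ A, A = U * (V + 1) := ⟨_, rfl⟩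
  have hULn : U = 2 * n * L := by rw [hU, hn, hl]; ring
  have hnL : L ≤ n * L := le_mul_of_one_le_left (by linarith) n1
  have hnL' : (n : ℤ) * 1024 ≤ n * L := mul_le_mul_of_nonneg_left (by linarith) (by linarith)
  have hUV : U ≤ U * V := le_mul_of_one_le_right (by linarith) (by linarith)
  have hUUV : 512 * (U * V) ≤ U * (U * V) :=
    mul_le_mul_of_nonneg_right (by linarith) (by linarith)
  have hP : U ^ 2 * V = U * (U * V) := by ring
  obtain ⟨C, hC⟩ : ∃ C, C = lucasPsi A (2 * n + 1) := ⟨_, rfl⟩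
  obtain ⟨J, hJ⟩ : ∃ J, J = lucasPsi (U ^ 2 * V) (n + 1) := ⟨_, rfl⟩
  have hA512 : 512 ≤ A := by rw [hA]; linarith
  have hP512 : 512 ≤ U ^ 2 * V := by linarith
  obtain ⟨h, hh⟩ := sub_two_dvd_lucasPsi_sub A (2 * n + 1)
  obtain ⟨k, hk⟩ := sub_two_dvd_lucasPsi_sub (U ^ 2 * V) (n + 1)
  have hhb : b ≤ h := by
    have h5 := lucasPsi_linear_le (by linarith : 2 ≤ A) (2 * n)
    have h6 : (A - 2) * (2 * n) ≤ (A - 2) * h := by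
      rw [← hh]; push_cast at h5 ⊢; linarith
    have := le_of_mul_le_mul_left h6 (by linarith)
    linarith
  have hkb : b ≤ k := by
    have h5 := lucasPsi_linear_le (by linarith : 2 ≤ U ^ 2 * V) n
    have h6 : (U ^ 2 * V - 2) * n ≤ (U ^ 2 * V - 2) * k := by
      rw [← hk]; push_cast at h5 ⊢; linarith
    have := le_of_mul_le_mul_left h6 (by linarith)
    linarith
  rw [← hC] at hh
  rw [← hJ] at hk
  have hnLV : n * L ≤ n * L * (V + 1) :=
    le_mul_of_one_le_right (by linarith) (by linarith)
  obtain ⟨a, ha⟩ : ∃ a : ℕ, (n * L * (V + 1) : ℤ) = a :=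
    ⟨(n * L * (V + 1)).toNat, by rw [Int.toNat_of_nonneg]; linarith⟩
  have hnLa : (n : ℤ) * L ≤ a := by
    rw [← ha]; exact le_mul_of_one_le_right (by linarith) (by linarith)
  obtain ⟨x, y, hxb, hyb, hsq⟩ := exists_square_of_eq_lucasPsi (a := a) (B := 2 * n + 1)
    (β := b) (A := A) (by zify; linarith) (by omega) (by zify; linarith)
    (by push_cast; linarith) (by rw [← ha, hA, hULn]; ring) hC
  refine ⟨h, k, l, w, x, y, ?_, hhb, hkb, hlb, hwb, hxb, hyb⟩
  rw [bridgeRelations_iff hU hV hA rfl (C := C) (by push_cast at hh; rw [hn]; linarith)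
    rfl rfl rfl rfl rfl rfl (J := J) (by push_cast at hk; rw [hn]; linarith) rfl rfl]
  refine ⟨?_, ?_, ?_, ?_⟩
  · refine hsq _ _ _ _ _ _ rfl rfl rfl rfl ?_ rfl
    rw [hn]; push_cast; ring
  · obtain ⟨p, hp⟩ : ∃ p : ℕ, (2 * n ^ 2 * L ^ 2 * V : ℤ) = p :=
      ⟨(2 * n ^ 2 * L ^ 2 * V).toNat, by
        rw [Int.toNat_of_nonneg]
        have : 0 ≤ V := by linarith
        positivity⟩
    have hp2 : U ^ 2 * V = 2 * p := by rw [← hp, hULn]; ring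
    obtain ⟨m, hm⟩ := lucasPsi_pell (p := p) (by zify; linarith) hp2 (n + 1)
    exact ⟨m, by rw [← hm, hJ]; ring⟩
  · have h5 := two_mul_sub_five_dvd A (2 * n + 1)
    have h4 : (4 : ℤ) ^ (2 * n + 1) = (b * w) ^ 2 := by
      rw [hbw, ← pow_mul, mul_comm (2 * n + 1) 2, pow_mul]; norm_num
    rw [h4, ← hbw, ← hC] at h5
    convert h5 using 1; ring
  · obtain ⟨rJ, i1, i2⟩ := lucasPsi_ratio_bounds n1' (L := L) (by linarith)
      (by linarith : 1 ≤ V) hULn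
    rw [← hA, ← hC, ← hJ] at i1 i2
    rw [← hJ] at rJ
    have rg : (1 : ℝ) ≤ g := by exact_mod_cast hg
    have rVg : 1024 * (g : ℝ) ≤ V := by exact_mod_cast hVg
    have rL : (1 : ℝ) ≤ L := by
      have : 1 ≤ L := by linarith
      exact_mod_cast this
    have hq := completeness_estimate rL rg rVg i1 i2 hL1 (hL2 hVbig)
    have h9 : (C : ℝ) / J - L = (C - L * J) / J := by field_simp
    rw [h9, abs_div, abs_of_pos rJ, div_lt_div_iff₀ rJ (by positivity), one_mul] at hq
    have h10 : |4 * (g : ℝ) * C - 4 * g * l * Y * J| < J := by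
      have rl : (L : ℝ) = Y * l := by exact_mod_cast hl
      have : 4 * (g : ℝ) * C - 4 * g * l * Y * J = (C - L * J) * (4 * g) := by rw [rl]; ring
      rw [this, abs_mul, abs_of_pos (by positivity : (0 : ℝ) < 4 * g)]
      exact hq
    have h11 : |4 * g * C - 4 * g * l * Y * J| < J := by exact_mod_cast h10
    exact sq_lt_sq' (by linarith [(abs_lt.1 h11).1]) (abs_lt.1 h11).2

/-- For `b = 0` the modulus `S` would have to divide `2`, which its size and parity forbid. -/
theorem not_bridge_zero {X Y g h k l w x y : ℤ} (hX : 0 ≤ X) (hY : 256 ≤ Y) (hg : 1 ≤ g)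
    (hl : 0 ≤ l) (hw : 0 ≤ w) : ¬ BridgeRelations 0 g Y X h k l w x y := by
  intro hrel
  obtain ⟨-, -, hST, -⟩ :=
    (bridgeRelations_iff rfl rfl rfl rfl rfl rfl rfl rfl rfl rfl rfl rfl rfl rfl).1 hrel
  have e : 3 * 0 * w * (2 * X + 1 + (2 * l * X * Y * (4 * g * w * Y + 1) - 2) * h)
      - 2 * (0 ^ 2 * w ^ 2 - 1) = 2 := by ring
  rw [e] at hST
  have hV : 0 ≤ 4 * g * w * Y := by positivity
  rcases (mul_nonneg hl hX).eq_or_lt with h0 | h0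
  · rw [show 2 * l * X * Y = 2 * (l * X) * Y by ring, ← h0] at hST
    norm_num at hST
  · have h1 : Y ≤ l * X * Y := le_mul_of_one_le_left (by linarith) h0
    have h2 : 2 * l * X * Y ≤ 2 * l * X * Y * (4 * g * w * Y + 1) :=
      le_mul_of_one_le_right (by linarith) (by linarith)
    have := Int.le_of_dvd (by norm_num) hST
    linarith

theorem bridge_theorem (b X Y g : ℤ)
    (hb : b ≥ 0) (hYb : Y ≥ b) (hY : Y ≥ 2 ^ 8) (hg : g ≥ 1) :
    (X ≥ 3 * b →
      (PowerAndBinomial b Y X ↔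
        ∃ h k l w x y : ℤ, BridgeRelations b g Y X h k l w x y ∧
          h ≥ b ∧ k ≥ b ∧ l ≥ b ∧ w ≥ b ∧ x ≥ b ∧ y ≥ b)) ∧
    (X ≥ b → PowerAndBinomial b Y X →
      ∃ h k l w x y : ℤ, BridgeRelations b g Y X h k l w x y ∧
        h ≥ b ∧ k ≥ b ∧ l ≥ b ∧ w ≥ b ∧ x ≥ b ∧ y ≥ b) := by
  have hY' : 256 ≤ Y := by norm_num at hY; exact hY
  refine ⟨fun hX => ⟨fun h1 => ?_, ?_⟩, fun hX h1 => ?_⟩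
  · exact bridge_of_powerAndBinomial (by linarith) hYb hY' hg h1
  · rintro ⟨h, k, l, w, x, y, hrel, hh, hk, hl, hw, hx, hy⟩
    rcases hb.le.eq_or_lt with h0 | h0
    · subst h0
      exact absurd hrel (not_bridge_zero (by linarith) hY' hg hl hw)
    · exact powerAndBinomial_of_bridge h0 (by linarith) hYb hY' hg hrel hh hk hl hw hx hy
  · exact bridge_of_powerAndBinomial hX hYb hY' hg h1
end

section
/- For every multivariate polynomial P ∈ ℤ[x₀, x₁, …, x_ν] and every a ∈ ℕ: there exist z₁, …, z_ν ∈ ℕ with P(a, z₁, …, z_ν) = 0 if and only if there exist integers x₁, …, x_ν, y₁, …, y_ν, w₁, …, w_ν such that P(a, x₁² + y₁² + w₁² + w₁, …, x_ν² + y_ν² + w_ν² + w_ν) = 0. -/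
/-!
The representation `n = x² + y² + w² + w` is equivalent to `4n + 1 = (2x)² + (2y)² + (2w + 1)²`,
so the content is that every `m = 4n + 1` is a sum of three squares (exactly one of which is then
odd, by reduction modulo 4). The converse direction only needs `w² + w ≥ 0` for integers `w`.

Sums of three squares are obtained by the classical argument of Gauss and Dirichlet.

* `isGram_of_det_eq_one`: every positive definite integral ternary form of determinant 1 is the
  Gram matrix of three vectors of `ℤ³`. Gauss reduction of a minimal leading coefficient `a` and
  leading minor `g` yields `3a² ≤ 4g` and `3g² ≤ 4a`, hence `a = g = 1`, and the form is then
  visibly a sum of three squares of linear forms.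
* `exists_prime_and_sq`: Dirichlet's theorem supplies a prime `p` with `2p = βm - 1` and
  `β ≡ 3 (mod 8)`. Quadratic reciprocity gives `(-β/p) = (p/β) = (-2p/β) = (1/β) = 1`, so that `-β`
  is a square modulo `2p`. This produces a form of determinant 1 with `m` on its diagonal.
-/

open MvPolynomial

/-! ### Ternary forms of determinant one -/

/-- The symmetric integer matrix with diagonal `a, b, c` and off-diagonal entries
`d` (position 23), `e` (position 13), `f` (position 12) is the Gram matrix of three vectors
of `ℤ³` for the standard scalar product. -/
def IsGram (a b c d e f : ℤ) : Prop :=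
  ∃ u v w : Fin 3 → ℤ, u ⬝ᵥ u = a ∧ v ⬝ᵥ v = b ∧ w ⬝ᵥ w = c ∧ v ⬝ᵥ w = d ∧ u ⬝ᵥ w = e ∧ u ⬝ᵥ v = f

lemma IsGram.swap₁₂ {a b c d e f : ℤ} (h : IsGram b a c e d f) : IsGram a b c d e f := by
  obtain ⟨u, v, w, h1, h2, h3, h4, h5, h6⟩ := h
  exact ⟨v, u, w, h2, h1, h3, h5, h4, by rw [dotProduct_comm, h6]⟩

lemma IsGram.swap₂₃ {a b c d e f : ℤ} (h : IsGram a c b d f e) : IsGram a b c d e f := by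
  obtain ⟨u, v, w, h1, h2, h3, h4, h5, h6⟩ := h
  exact ⟨u, w, v, h1, h3, h2, by rw [dotProduct_comm, h4], h6, h5⟩

/-- Undoes the change of basis `v ↦ v + t u`. -/
lemma IsGram.of_shift₁₂ {a b c d e f : ℤ} (t : ℤ)
    (h : IsGram a (b + 2 * t * f + t ^ 2 * a) c (d + t * e) e (f + t * a)) :
    IsGram a b c d e f := by
  obtain ⟨u, v, w, h1, h2, h3, h4, h5, h6⟩ := h
  refine ⟨u, v - t • u, w, h1, ?_, h3, ?_, h5, ?_⟩
  · simp only [sub_dotProduct, dotProduct_sub, smul_dotProduct, dotProduct_smul, smul_eq_mul,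
      dotProduct_comm v u, h1, h2, h6]
    ring
  · simp only [sub_dotProduct, smul_dotProduct, smul_eq_mul, h4, h5]
    ring
  · simp only [dotProduct_sub, dotProduct_smul, smul_eq_mul, h1, h6]
    ring

/-- Undoes the change of basis `w ↦ w + t v`. -/
lemma IsGram.of_shift₂₃ {a b c d e f : ℤ} (t : ℤ)
    (h : IsGram a b (c + 2 * t * d + t ^ 2 * b) (d + t * b) (e + t * f) f) :
    IsGram a b c d e f := by
  obtain ⟨u, v, w, h1, h2, h3, h4, h5, h6⟩ := h
  refine ⟨u, v, w - t • v, h1, h2, ?_, ?_, ?_, h6⟩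
  · simp only [sub_dotProduct, dotProduct_sub, smul_dotProduct, dotProduct_smul, smul_eq_mul,
      dotProduct_comm w v, h2, h3, h4]
    ring
  · simp only [dotProduct_sub, dotProduct_smul, smul_eq_mul, h2, h4]
    ring
  · simp only [dotProduct_sub, dotProduct_smul, smul_eq_mul, h5, h6]
    ring

lemma exists_abs_shift_le (a f : ℤ) (ha : 0 < a) : ∃ t : ℤ, |2 * (f + t * a)| ≤ a := by
  refine ⟨-((2 * f + a) / (2 * a)), ?_⟩
  have h1 := Int.emod_add_mul_ediv (2 * f + a) (2 * a)
  have h2 := Int.emod_nonneg (2 * f + a) (show 2 * a ≠ 0 by omega)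
  have h3 := Int.emod_lt_of_pos (2 * f + a) (show 0 < 2 * a by omega)
  rw [abs_le]
  constructor <;> linarith

/-- One step of Gauss reduction: a form of determinant 1 whose off-diagonal data are already
reduced is a Gram matrix, provided the same holds for all forms with smaller leading coefficient
`a`, or with the same `a` and smaller leading minor `ab - f²`. -/
lemma isGram_of_reduced {a b c d e f : ℤ} (ha : 0 < a) (hg : 0 < a * b - f ^ 2)
    (hdet : a * b * c + 2 * d * e * f - a * d ^ 2 - b * e ^ 2 - c * f ^ 2 = 1)
    (hf : |2 * f| ≤ a) (hh : |2 * (a * d - e * f)| ≤ a * b - f ^ 2)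
    (ih₁ : b < a → IsGram b a c e d f)
    (ih₂ : a * c - e ^ 2 < a * b - f ^ 2 → IsGram a c b d f e) :
    IsGram a b c d e f := by
  by_cases hba : b < a
  · exact (ih₁ hba).swap₁₂
  by_cases hkg : a * c - e ^ 2 < a * b - f ^ 2
  · exact (ih₂ hkg).swap₂₃
  push Not at hba hkg
  -- `g, h, k` are the coefficients of the binary form left after completing the square in `x`;
  -- its determinant is `a` times the determinant of the ternary form.
  obtain ⟨g, hgdef⟩ : ∃ g, g = a * b - f ^ 2 := ⟨_, rfl⟩
  obtain ⟨k, hkdef⟩ : ∃ k, k = a * c - e ^ 2 := ⟨_, rfl⟩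
  obtain ⟨h, hhdef⟩ : ∃ h, h = a * d - e * f := ⟨_, rfl⟩
  rw [← hgdef] at hg hh hkg
  rw [← hkdef] at hkg
  rw [← hhdef] at hh
  have hgk : g * k - h ^ 2 = a := by
    subst hgdef hkdef hhdef
    linear_combination a * hdet
  have hf2 : (2 * f) ^ 2 ≤ a ^ 2 := sq_le_sq' (abs_le.1 hf).1 (abs_le.1 hf).2
  have hh2 : (2 * h) ^ 2 ≤ g ^ 2 := sq_le_sq' (abs_le.1 hh).1 (abs_le.1 hh).2
  have e1 : 3 * a ^ 2 ≤ 4 * g := by nlinarith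
  have e2 : 3 * g ^ 2 ≤ 4 * a := by nlinarith
  have ha1 : a = 1 := by nlinarith
  subst ha1
  have hg1 : g = 1 := by nlinarith
  have hf0 : f = 0 := by
    have := abs_le.1 hf
    omega
  have hh0 : h = 0 := by
    have := abs_le.1 hh
    omega
  subst hf0 hg1 hh0
  have hb : b = 1 := by linarith
  have hd : d = 0 := by linarith
  subst hb hd
  have hc : c = e ^ 2 + 1 := by linarith
  subst hc
  refine ⟨![1, 0, 0], ![0, 1, 0], ![e, 0, 1], ?_, ?_, ?_, ?_, ?_, ?_⟩ <;>
    simp [dotProduct, Fin.sum_univ_three]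
  ring

/-- A positive definite integral ternary form of determinant 1 is a Gram matrix of vectors of
`ℤ³`. Positivity is expressed by the leading principal minors, and the recursion is on the
lexicographic order of the pair `(a, ab - f²)`. -/
theorem isGram_of_det_eq_one (a b c d e f : ℤ) (ha : 0 < a) (hg : 0 < a * b - f ^ 2)
    (hdet : a * b * c + 2 * d * e * f - a * d ^ 2 - b * e ^ 2 - c * f ^ 2 = 1) :
    IsGram a b c d e f := by
  obtain ⟨A, hA⟩ : ∃ A : ℕ, A = a.toNat := ⟨_, rfl⟩
  obtain ⟨G, hG⟩ : ∃ G : ℕ, G = (a * b - f ^ 2).toNat := ⟨_, rfl⟩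
  induction A using Nat.strong_induction_on generalizing G a b c d e f with
  | _ A ihA =>
  induction G using Nat.strong_induction_on generalizing a b c d e f with
  | _ G ihG =>
  obtain ⟨t, ht⟩ := exists_abs_shift_le a f ha
  apply IsGram.of_shift₁₂ t
  have hg' : a * (b + 2 * t * f + t ^ 2 * a) - (f + t * a) ^ 2 = a * b - f ^ 2 := by ring
  have hdet' : a * (b + 2 * t * f + t ^ 2 * a) * c + 2 * (d + t * e) * e * (f + t * a)
      - a * (d + t * e) ^ 2 - (b + 2 * t * f + t ^ 2 * a) * e ^ 2 - c * (f + t * a) ^ 2 = 1 := by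
    linear_combination hdet
  generalize b + 2 * t * f + t ^ 2 * a = b' at *
  generalize d + t * e = d' at *
  generalize f + t * a = f' at *
  rw [← hg'] at hg hG
  clear hg' hdet
  -- A shift of `w` by `s v` adds `s g` to `a d - e f` and fixes the entries `a, b, f`.
  obtain ⟨s, hs⟩ := exists_abs_shift_le (a * b' - f' ^ 2) (a * d' - e * f') hg
  apply IsGram.of_shift₂₃ s
  have hh' : a * d' - e * f' + s * (a * b' - f' ^ 2)
      = a * (d' + s * b') - (e + s * f') * f' := by ring
  have hdet'' : a * b' * (c + 2 * s * d' + s ^ 2 * b') + 2 * (d' + s * b') * (e + s * f') * f'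
      - a * (d' + s * b') ^ 2 - b' * (e + s * f') ^ 2 - (c + 2 * s * d' + s ^ 2 * b') * f' ^ 2
      = 1 := by
    linear_combination hdet'
  rw [hh'] at hs
  clear hh' hdet'
  generalize c + 2 * s * d' + s ^ 2 * b' = c' at *
  generalize d' + s * b' = d'' at *
  generalize e + s * f' = e' at *
  have hb : 0 < b' := by
    by_contra! hb
    nlinarith [sq_nonneg f']
  have hk : 0 < a * c' - e' ^ 2 := by
    have : (a * b' - f' ^ 2) * (a * c' - e' ^ 2) = a + (a * d'' - e' * f') ^ 2 := by
      linear_combination a * hdet''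
    refine pos_of_mul_pos_right ?_ hg.le
    rw [this]
    positivity
  refine isGram_of_reduced ha hg hdet'' ht hs (fun hlt => ?_) (fun hlt => ?_)
  · exact ihA b'.toNat (by omega) b' a c' e' d'' f' hb (by linarith) (by linarith) rfl _ rfl
  · exact ihG (a * c' - e' ^ 2).toNat (by omega) a c' b' d'' f' e' ha hk (by linarith) hA rfl

/-! ### The arithmetic input -/

/-- `-β` is a square modulo `p`: since `-2p ≡ 1` modulo `β` and `(-2/β) = 1`, reciprocity gives
`(-β/p) = (p/β) = 1`. -/
lemma jacobiSym_neg_eq_one {β p m : ℕ} (hp : Odd p) (hβ : β % 8 = 3) (h : 2 * p + 1 = β * m) :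
    jacobiSym (-(β : ℤ)) p = 1 := by
  have hβo : Odd β := Nat.odd_iff.2 (by omega)
  have h2 : jacobiSym (-2) β = 1 := by
    rw [jacobiSym.at_neg_two hβo, ZMod.χ₈'_nat_eq_if_mod_eight, if_neg (by omega),
      if_pos (by omega)]
  have h3 : jacobiSym (-2 * (p : ℤ)) β = 1 := by
    have hz : (2 * p + 1 : ℤ) = β * m := by exact_mod_cast h
    have : -2 * (p : ℤ) = 1 + β * (-m) := by linear_combination -hz
    rw [this, jacobiSym.mod_left, Int.add_mul_emod_self_left, ← jacobiSym.mod_left,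
      jacobiSym.one_left]
  have h4 : jacobiSym (p : ℤ) β = 1 := by
    rw [jacobiSym.mul_left, h2, one_mul] at h3
    exact h3
  rw [jacobiSym.neg _ hp]
  rcases Nat.odd_mod_four_iff.1 (Nat.odd_iff.1 hp) with h1 | h1
  · rw [ZMod.χ₄_nat_one_mod_four h1, jacobiSym.quadratic_reciprocity_one_mod_four' hβo h1, h4]
    norm_num
  · rw [ZMod.χ₄_nat_three_mod_four h1,
      jacobiSym.quadratic_reciprocity_three_mod_four (by omega) h1, h4]
    norm_num

/-- For `m = 4n + 1` there is `β > 0` such that `-β` is a square modulo `βm - 1`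
(which is twice a prime). -/
lemma exists_prime_and_sq (n : ℕ) : ∃ (β p : ℕ) (t : ℤ), 0 < β ∧ 0 < p ∧
    2 * p + 1 = β * (4 * n + 1) ∧ (2 * p : ℤ) ∣ t ^ 2 + β := by
  have hcop : Nat.Coprime (6 * n + 1) (4 * (4 * n + 1)) := by
    refine Nat.Coprime.mul_right ?_ ?_
    · rw [show (4 : ℕ) = 2 ^ 2 by norm_num]
      exact Nat.Coprime.pow_right _ (Nat.coprime_two_right.2 ⟨3 * n, by ring⟩)
    · -- `3 (4n + 1) - 2 (6n + 1) = 1`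
      rw [← Nat.isCoprime_iff_coprime]
      exact ⟨-2, 3, by push_cast; ring⟩
  obtain ⟨p, hpgt, hpp, hpmod⟩ := Nat.forall_exists_prime_gt_and_modEq (6 * n + 1)
    (show 4 * (4 * n + 1) ≠ 0 by omega) hcop
  obtain ⟨v, hv⟩ := (Nat.modEq_iff_dvd' hpgt.le).1 hpmod.symm
  have hpv : p = 6 * n + 1 + 4 * (4 * n + 1) * v := by omega
  have hodd : Odd p := ⟨3 * n + 2 * (4 * n + 1) * v, by rw [hpv]; ring⟩
  have hrel : 2 * p + 1 = (8 * v + 3) * (4 * n + 1) := by rw [hpv]; ring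
  have : Fact p.Prime := ⟨hpp⟩
  have hJ := jacobiSym_neg_eq_one hodd (by omega) hrel
  rw [← jacobiSym.legendreSym.to_jacobiSym] at hJ
  have hne : ((-((8 * v + 3 : ℕ) : ℤ) : ℤ) : ZMod p) ≠ 0 := by
    intro h0
    rw [(legendreSym.eq_zero_iff p _).2 h0] at hJ
    exact zero_ne_one hJ
  obtain ⟨r, hr⟩ := (legendreSym.eq_one_iff p hne).1 hJ
  obtain ⟨s, rfl⟩ := ZMod.intCast_surjective r
  have hps : (p : ℤ) ∣ s ^ 2 + (8 * v + 3 : ℕ) := by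
    rw [← ZMod.intCast_zmod_eq_zero_iff_dvd]
    push_cast at hr ⊢
    linear_combination -hr
  have hpo : Odd (p : ℤ) := by exact_mod_cast hodd
  have hβo : Odd ((8 * v + 3 : ℕ) : ℤ) := by exact_mod_cast (⟨4 * v + 1, by ring⟩ : Odd (8 * v + 3))
  -- One of `s`, `s + p` is odd, which makes `t² + β` even as well.
  obtain ⟨t, hto, htp⟩ : ∃ t : ℤ, Odd t ∧ (p : ℤ) ∣ t ^ 2 + (8 * v + 3 : ℕ) := by
    rcases Int.even_or_odd s with he | ho
    · refine ⟨s + p, he.add_odd hpo, ?_⟩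
      have : (s + p) ^ 2 + ((8 * v + 3 : ℕ) : ℤ)
          = s ^ 2 + ((8 * v + 3 : ℕ) : ℤ) + p * (2 * s + p) := by ring
      rw [this]
      exact dvd_add hps (dvd_mul_right _ _)
    · exact ⟨s, ho, hps⟩
  exact ⟨8 * v + 3, p, t, by omega, hpp.pos, hrel,
    (by exact_mod_cast (Nat.coprime_two_left.2 hodd).isCoprime : IsCoprime (2 : ℤ) p).mul_dvd
      (even_iff_two_dvd.1 (hto.pow.add_odd hβo)) htp⟩

/-! ### Sums of three squares -/

theorem exists_three_squares (n : ℕ) :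
    ∃ x y z : ℤ, x ^ 2 + y ^ 2 + z ^ 2 = 4 * n + 1 := by
  obtain ⟨β, p, t, hβ, hp, hrel, q, hq⟩ := exists_prime_and_sq n
  have hz : (2 * p + 1 : ℤ) = β * (4 * n + 1) := by exact_mod_cast hrel
  have hβ' : (0 : ℤ) < β := by exact_mod_cast hβ
  have hp' : (0 : ℤ) < p := by exact_mod_cast hp
  have hq0 : 0 < q := by
    refine pos_of_mul_pos_right (a := (2 * p : ℤ)) ?_ (by positivity)
    rw [← hq]
    positivity
  obtain ⟨u, v, w, -, -, hw, -⟩ := isGram_of_det_eq_one q (2 * p) (4 * n + 1) 0 1 t hq0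
    (by linarith) (by linear_combination (-(4 * n + 1 : ℤ)) * hq - hz)
  refine ⟨w 0, w 1, w 2, ?_⟩
  rw [← hw]
  simp [dotProduct, Fin.sum_univ_three]
  ring

/-- Modulo 4, exactly one of three squares summing to `4n + 1` is odd. -/
lemma exists_repr (n : ℕ) : ∃ x y w : ℤ, x ^ 2 + y ^ 2 + w ^ 2 + w = n := by
  obtain ⟨x, y, z, h⟩ := exists_three_squares n
  rcases Int.even_or_odd' x with ⟨i, rfl | rfl⟩ <;>
  rcases Int.even_or_odd' y with ⟨j, rfl | rfl⟩ <;>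
  rcases Int.even_or_odd' z with ⟨k, rfl | rfl⟩ <;> ring_nf at h
  · omega
  · exact ⟨i, j, k, by linarith⟩
  · exact ⟨i, k, j, by linarith⟩
  · omega
  · exact ⟨j, k, i, by linarith⟩
  all_goals omega

theorem nat_unknowns_to_int_unknowns (ν : ℕ) (P : MvPolynomial (Fin (ν + 1)) ℤ) (a : ℕ) :
    (∃ z : Fin ν → ℕ,
        eval (Fin.cases (a : ℤ) (fun i => (z i : ℤ)) : Fin (ν + 1) → ℤ) P = 0) ↔
    (∃ x y w : Fin ν → ℤ,
        eval (Fin.cases (a : ℤ)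
          (fun i => x i ^ 2 + y i ^ 2 + w i ^ 2 + w i) : Fin (ν + 1) → ℤ) P = 0) := by
  constructor
  · rintro ⟨z, hz⟩
    choose x y w h using fun i => exists_repr (z i)
    refine ⟨x, y, w, ?_⟩
    simp only [h]
    exact hz
  · rintro ⟨x, y, w, h⟩
    have hnn (i : Fin ν) : 0 ≤ x i ^ 2 + y i ^ 2 + w i ^ 2 + w i := by
      -- `w² + w = w (w + 1)` is a product of consecutive integers
      have : 0 ≤ w i ^ 2 + w i := by
        rcases le_or_gt 0 (w i) with hw | hw
        · positivity
        · nlinarith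
      nlinarith [sq_nonneg (x i), sq_nonneg (y i)]
    refine ⟨fun i => (x i ^ 2 + y i ^ 2 + w i ^ 2 + w i).toNat, ?_⟩
    simp only [Int.toNat_of_nonneg (hnn _)]
    exact h
end
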